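/- arXiv:1904.05302 — 7 statements merged into one kernel-verified Lean document; each statement's English description precedes it below -/
import Mathlib

section
/- Let P(z) = ∑_{j=0}^{n} a_j z^j be a complex polynomial of degree n > 2 all of whose zeros lie in |z| ≤ k with k ≥ 1. Then max_{|z|=1}|P′(z)| ≥ (1/(1+k^n))·(n + (k^n|a_n| − |a_0|)/(k^n|a_n| + |a_0|))·max_{|z|=1}|P(z)| + (|a_{n−1}|/(k(1+k^n)))·(n + (k^n|a_n| − |a_0|)/(k^n|a_n| + |a_0|))·((k^n − 1)/n − (k^{n−2} − 1)/(n−2)) + |a_1|·(1 − 1/k^2). -/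
open Polynomial Metric

/-- The maximum of `|P(z)|` over the circle `|z| = r`. -/
noncomputable def maxMod (P : Polynomial ℂ) (r : ℝ) : ℝ :=
  ⨆ z : sphere (0 : ℂ) r, ‖P.eval (z : ℂ)‖


lemma exists_unit_norm_add (x y : ℂ) : ∃ η : ℂ, ‖η‖ = 1 ∧ ‖x + η * y‖ = ‖x‖ + ‖y‖ := by
  by_cases hx : x = 0
  · exact ⟨1, by simp, by simp [hx]⟩
  by_cases hy : y = 0
  · exact ⟨1, by simp, by simp [hy]⟩
  have hx' : (‖x‖ : ℂ) ≠ 0 := by simpa using hx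
  have hy' : (‖y‖ : ℂ) ≠ 0 := by simpa using hy
  refine ⟨(x / ‖x‖) * (‖y‖ / y), ?_, ?_⟩
  · have h1 : ‖x‖ ≠ 0 := by simpa using hx
    have h2 : ‖y‖ ≠ 0 := by simpa using hy
    simp only [norm_mul, norm_div, Complex.norm_real, norm_norm]
    field_simp
  · have h1 : 0 < ‖x‖ := by simpa using hx
    have : x + (x / ‖x‖) * (‖y‖ / y) * y = x / ‖x‖ * ((‖x‖ + ‖y‖ : ℝ) : ℂ) := by
      push_cast
      field_simp
    rw [this, norm_mul, norm_div, Complex.norm_real, Complex.norm_real, norm_norm,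
      div_self h1.ne', one_mul, Real.norm_of_nonneg (by positivity)]

lemma norm_sq_diff (a z : ℂ) : ‖1 - (starRingEnd ℂ) a * z‖ ^ 2 - ‖z - a‖ ^ 2 =
    (1 - ‖a‖ ^ 2) * (1 - ‖z‖ ^ 2) := by
  simp only [Complex.sq_norm, Complex.normSq_apply]
  simp
  ring

lemma node_norm (d : ℕ) (a η ζ : ℂ) (ha : ‖a‖ < 1) (hη : ‖η‖ = 1)
    (h : ζ ^ (d + 1) * (ζ - a) = η * (1 - (starRingEnd ℂ) a * ζ)) : ‖ζ‖ = 1 := by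
  have hn : ‖ζ‖ ^ (d + 1) * ‖ζ - a‖ = ‖1 - (starRingEnd ℂ) a * ζ‖ := by
    have := congrArg norm h
    simpa [hη] using this
  have hd := norm_sq_diff a ζ
  have ha2 : 0 < 1 - ‖a‖ ^ 2 := by nlinarith [norm_nonneg a]
  rcases lt_trichotomy ‖ζ‖ 1 with hlt | heq | hgt
  · exfalso
    have h1 : 0 < 1 - ‖ζ‖ ^ 2 := by nlinarith [norm_nonneg ζ]
    have h2 : ‖ζ‖ ^ (d + 1) ≤ 1 := pow_le_one₀ (norm_nonneg _) hlt.le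
    have h3 : ‖1 - (starRingEnd ℂ) a * ζ‖ ≤ ‖ζ - a‖ := by
      rw [← hn]
      exact mul_le_of_le_one_left (norm_nonneg _) h2
    have h4 := mul_pos ha2 h1
    nlinarith [norm_nonneg (1 - (starRingEnd ℂ) a * ζ), norm_nonneg (ζ - a)]
  · exact heq
  · exfalso
    have h1 : 0 < ‖ζ‖ ^ 2 - 1 := by nlinarith [norm_nonneg ζ]
    have h2 : 1 ≤ ‖ζ‖ ^ (d + 1) := one_le_pow₀ hgt.le
    have h3 : ‖ζ - a‖ ≤ ‖1 - (starRingEnd ℂ) a * ζ‖ := by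
      rw [← hn]
      exact le_mul_of_one_le_left (norm_nonneg _) h2
    have h4 := mul_pos ha2 h1
    nlinarith [norm_nonneg (1 - (starRingEnd ℂ) a * ζ), norm_nonneg (ζ - a)]

lemma interp_bound (d : ℕ) (f : ℂ[X]) (hf : f.natDegree ≤ d + 2) (M : ℝ)
    (hM : ∀ z : ℂ, ‖z‖ = 1 → ‖f.eval z‖ ≤ M) (a η : ℂ) (ha : ‖a‖ < 1) (hη : ‖η‖ = 1) :
    ‖f.eval a + η * ((1 - ‖a‖ ^ 2 : ℝ) * f.coeff (d + 2))‖ ≤ M := by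
  classical
  have ha2 : 0 < 1 - ‖a‖ ^ 2 := by nlinarith [norm_nonneg a]
  have haa : a * (starRingEnd ℂ) a = (‖a‖ : ℂ) ^ 2 := Complex.mul_conj' a
  set b := (starRingEnd ℂ) a with hb
  set w : ℂ[X] := X ^ (d + 2) + (- C a * X ^ (d + 1) + C (η * b) * X - C η) with hw
  have hdeg1 : (- C a * X ^ (d + 1) + C (η * b) * X - C η).degree < ((d + 2 : ℕ) : WithBot ℕ) := by
    refine lt_of_le_of_lt (b := ((d + 1 : ℕ) : WithBot ℕ)) ?_ (by exact_mod_cast Nat.lt_succ_self _)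
    apply degree_le_of_natDegree_le
    have : (C (η * b) * X - C η).natDegree ≤ d + 1 := by
      compute_degree
      omega
    compute_degree!
  have hmonic : w.Monic := monic_X_pow_add hdeg1
  have hwdeg : w.degree = ((d + 2 : ℕ) : WithBot ℕ) := by
    rw [hw, degree_add_eq_left_of_degree_lt (by rwa [degree_X_pow]), degree_X_pow]
  have hwnd : w.natDegree = d + 2 := natDegree_eq_of_degree_eq_some hwdeg
  have hw0 : w ≠ 0 := hmonic.ne_zero
  have hwev : ∀ z, w.eval z = z ^ (d + 1) * (z - a) - η * (1 - b * z) := by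
    intro z; simp [hw]; ring
  have hwa : w.eval a = - (η * ((1 - ‖a‖ ^ 2 : ℝ) : ℂ)) := by
    rw [hwev]; push_cast; rw [← haa]; ring
  have hwa0 : w.eval a ≠ 0 := by
    rw [hwa]
    have : η ≠ 0 := by rintro rfl; simp at hη
    exact neg_ne_zero.2 (mul_ne_zero this (by exact_mod_cast ha2.ne'))
  have hroot : ∀ z, w.IsRoot z → z ^ (d + 1) * (z - a) = η * (1 - b * z) := by
    intro z hz
    have : w.eval z = 0 := hz
    rw [hwev] at this
    linear_combination this
  have hnorm : ∀ z, w.IsRoot z → ‖z‖ = 1 := fun z hz => node_norm d a η z ha hη (hroot z hz)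
  have hder : ∀ z, w.IsRoot z → (derivative w).eval z * (z - a) =
      η * (((d + 1) * ‖1 - b * z‖ ^ 2 + (1 - ‖a‖ ^ 2) : ℝ) : ℂ) := by
    intro z hz
    have h1 := hroot z hz
    have hzz : z * (starRingEnd ℂ) z = 1 := by
      rw [Complex.mul_conj', hnorm z hz]; simp
    have hN : ((‖1 - b * z‖ ^ 2 : ℝ) : ℂ) = (1 - b * z) * (1 - a * (starRingEnd ℂ) z) := by
      push_cast
      rw [← Complex.mul_conj']
      simp [hb]
    have he : (derivative w).eval z = (d + 1) * z ^ d * (z - a) + z ^ (d + 1) + η * b := by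
      simp [hw]; ring
    have hs : ((((d + 1) * ‖1 - b * z‖ ^ 2 + (1 - ‖a‖ ^ 2) : ℝ)) : ℂ) =
       (d + 1) * ((‖1 - b * z‖ ^ 2 : ℝ) : ℂ) + (1 - a * b) := by
      rw [haa]; push_cast; ring
    rw [hs, hN, he]
    generalize (starRingEnd ℂ) z = y at *
    have h2 : z ^ d * (z - a) = η * (1 - b * z) * y := by
      linear_combination y * h1 - z ^ d * (z - a) * hzz
    linear_combination (d + 1) * (z - a) * h2 + h1 + (d + 1) * η * (1 - b * z) * hzz
  have hpos : ∀ z, 0 < (d + 1) * ‖1 - b * z‖ ^ 2 + (1 - ‖a‖ ^ 2) := fun z => by positivity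
  have hη0 : η ≠ 0 := by rintro rfl; simp at hη
  have hsimple : ∀ z, w.IsRoot z → (derivative w).eval z ≠ 0 := by
    intro z hz h0
    have := hder z hz
    rw [h0, zero_mul] at this
    exact mul_ne_zero hη0 (by exact_mod_cast (hpos z).ne') this.symm
  have hnodup : w.roots.Nodup := by
    rw [Multiset.nodup_iff_count_le_one]
    intro z
    rw [count_roots]
    by_contra hcon
    push Not at hcon
    have := (one_lt_rootMultiplicity_iff_isRoot hw0).1 hcon
    exact hsimple z this.1 this.2
  set s := w.roots.toFinset with hs
  have hmem : ∀ z, z ∈ s ↔ w.IsRoot z := by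
    intro z; simp [hs, hw0]
  have hnodal : Lagrange.nodal s id = w := by
    rw [Lagrange.nodal_eq]
    conv_rhs => rw [(IsAlgClosed.splits w).eq_prod_roots_of_monic hmonic]
    rw [Finset.prod_eq_multiset_prod]
    simp [hs, Multiset.dedup_eq_self.2 hnodup]
  have hcard : s.card = d + 2 := by
    rw [hs, Multiset.toFinset_card_of_nodup hnodup, ← hwnd]
    exact ((IsAlgClosed.splits w).natDegree_eq_card_roots).symm
  let c : ℂ → ℝ := fun z => (1 - ‖a‖ ^ 2) / ((d + 1) * ‖1 - b * z‖ ^ 2 + (1 - ‖a‖ ^ 2))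
  have hc0 : ∀ z, 0 ≤ c z := fun z => div_nonneg ha2.le (hpos z).le
  have hane : ∀ z ∈ s, a ≠ id z := by
    intro z hz h
    have h1 := (hmem z).1 hz
    simp only [id] at h
    rw [← h] at h1
    exact hwa0 h1
  have hcw : ∀ z ∈ s, w.eval a * (Lagrange.nodalWeight s id z * (a - id z)⁻¹) = (c z : ℂ) := by
    intro z hz
    have hz' := (hmem z).1 hz
    rw [Lagrange.nodalWeight_eq_eval_derivative_nodal hz, hnodal, hwa]
    have h1 := hder z hz'
    have h2 := hsimple z hz'
    have h3 : a - z ≠ 0 := sub_ne_zero.2 (hane z hz)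
    have h4 : ((((d + 1) * ‖1 - b * z‖ ^ 2 + (1 - ‖a‖ ^ 2) : ℝ)) : ℂ) ≠ 0 := by
      exact_mod_cast (hpos z).ne'
    simp only [c, id]
    rw [Complex.ofReal_div]
    generalize ((((d + 1) * ‖1 - b * z‖ ^ 2 + (1 - ‖a‖ ^ 2) : ℝ)) : ℂ) = Y at *
    field_simp
    linear_combination ((1 - ‖a‖ ^ 2 : ℝ) : ℂ) * h1
  have key : ∀ g : ℂ[X], g.natDegree ≤ d + 2 →
      g.eval a + η * ((1 - ‖a‖ ^ 2 : ℝ) * g.coeff (d + 2)) = ∑ z ∈ s, (c z : ℂ) * g.eval z := by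
    intro g hg
    set h : ℂ[X] := g - C (g.coeff (d + 2)) * w with hh
    have hdeg : h.degree < (s.card : WithBot ℕ) := by
      rw [hcard]
      rw [degree_lt_iff_coeff_zero]
      intro i hi
      rcases hi.eq_or_lt with rfl | hi
      · have : w.coeff (d + 2) = 1 := by
          have := hmonic.coeff_natDegree
          rwa [hwnd] at this
        simp [hh, this]
      · simp [hh, coeff_eq_zero_of_natDegree_lt (hg.trans_lt hi),
          coeff_eq_zero_of_natDegree_lt (hwnd.trans_lt hi)]
    have h1 := Lagrange.eq_interpolate (v := id) (s := s) (f := h) Function.injective_id.injOn hdeg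
    have h2 := congrArg (eval a) h1
    rw [Lagrange.eval_interpolate_not_at_node _ hane, hnodal, Finset.mul_sum] at h2
    have h3 : h.eval a = g.eval a + η * ((1 - ‖a‖ ^ 2 : ℝ) * g.coeff (d + 2)) := by
      simp only [hh, eval_sub, eval_mul, eval_C, hwa]; ring
    rw [← h3, h2]
    refine Finset.sum_congr rfl fun z hz => ?_
    have h4 : h.eval z = g.eval z := by
      have : w.eval z = 0 := (hmem z).1 hz
      simp [hh, this]
    rw [← hcw z hz, id, h4]
    ring
  have hsum : ∑ z ∈ s, c z = 1 := by
    have := key 1 (by simp)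
    rw [coeff_one] at this
    simp at this
    exact_mod_cast this.symm
  rw [key f hf]
  calc _ ≤ ∑ z ∈ s, ‖(c z : ℂ) * f.eval z‖ := norm_sum_le _ _
    _ ≤ ∑ z ∈ s, c z * M := by
      refine Finset.sum_le_sum fun z hz => ?_
      rw [norm_mul, Complex.norm_real, Real.norm_of_nonneg (hc0 z)]
      exact mul_le_mul_of_nonneg_left (hM z (hnorm z ((hmem z).1 hz))) (hc0 z)
    _ = M := by rw [← Finset.sum_mul, hsum, one_mul]

lemma eval_reflect_inv (N : ℕ) (f : ℂ[X]) (hf : f.natDegree ≤ N) (z : ℂ) (hz : z ≠ 0) :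
    (reflect N f).eval z = z ^ N * f.eval z⁻¹ := by
  let : Invertible z⁻¹ := invertibleOfNonzero (inv_ne_zero hz)
  have := eval₂_reflect_mul_pow (RingHom.id ℂ) z⁻¹ N f hf
  simp only [invOf_eq_inv, inv_inv] at this
  change (reflect N f).eval z * _ = f.eval _ at this
  rw [← this, inv_pow]
  field_simp

/-- Growth estimate with the constant-term refinement. -/
lemma growth (d : ℕ) (p : ℂ[X]) (hp : p.natDegree ≤ d + 2) (M : ℝ)
    (hM : ∀ z : ℂ, ‖z‖ = 1 → ‖p.eval z‖ ≤ M) (z : ℂ) (hz : 1 ≤ ‖z‖) :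
    ‖p.eval z‖ ≤ ‖z‖ ^ (d + 2) * M - (‖z‖ ^ (d + 2) - ‖z‖ ^ d) * ‖p.coeff 0‖ := by
  rcases hz.eq_or_lt with h1 | h1
  · rw [← h1]; simpa using hM z h1.symm
  have hz0 : z ≠ 0 := by rintro rfl; simp at hz; linarith
  have hzp : 0 < ‖z‖ := by linarith
  set f := reflect (d + 2) p with hf
  have hfd : f.natDegree ≤ d + 2 := natDegree_reflect_le.trans (by simp [hp])
  have hfM : ∀ z : ℂ, ‖z‖ = 1 → ‖f.eval z‖ ≤ M := by
    intro u hu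
    have hu0 : u ≠ 0 := by rintro rfl; simp at hu
    rw [hf, eval_reflect_inv _ _ hp _ hu0, norm_mul, norm_pow, hu, one_pow, one_mul]
    exact hM _ (by simp [hu])
  have hfc : f.coeff (d + 2) = p.coeff 0 := by
    rw [hf, coeff_reflect, revAt_le le_rfl, Nat.sub_self]
  have hfz : f.eval z⁻¹ = (z⁻¹) ^ (d + 2) * p.eval z := by
    rw [hf, eval_reflect_inv _ _ hp _ (inv_ne_zero hz0), inv_inv]
  obtain ⟨η, hη, hadd⟩ := exists_unit_norm_add (f.eval z⁻¹)
    ((1 - ‖z⁻¹‖ ^ 2 : ℝ) * f.coeff (d + 2))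
  have hlt : ‖z⁻¹‖ < 1 := by rw [norm_inv]; exact inv_lt_one_of_one_lt₀ h1
  have hb := interp_bound d f hfd M hfM z⁻¹ η hlt hη
  have h2 : 0 ≤ 1 - ‖z⁻¹‖ ^ 2 := by nlinarith [norm_nonneg z⁻¹]
  rw [hadd, hfz, hfc, norm_mul, norm_mul, Complex.norm_real, Real.norm_of_nonneg h2, norm_pow,
    norm_inv] at hb
  have h3 := mul_le_mul_of_nonneg_left hb (pow_pos hzp (d + 2)).le
  have h4 : ‖z‖ ^ (d + 2) * (‖z‖⁻¹ ^ (d + 2) * ‖p.eval z‖ + (1 - ‖z‖⁻¹ ^ 2) * ‖p.coeff 0‖) =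
    ‖p.eval z‖ + (‖z‖ ^ (d + 2) - ‖z‖ ^ d) * ‖p.coeff 0‖ := by
    rw [inv_pow, inv_pow]
    field_simp
    ring
  linarith

lemma re_div_le (z w : ℂ) (hz : z ≠ w) (h : ‖z‖ ≤ ‖w‖) : (z * (1 / (z - w))).re ≤ 1 / 2 := by
  have h0 : 0 < Complex.normSq (z - w) := Complex.normSq_pos.2 (sub_ne_zero.2 hz)
  have h1 : ‖z‖ ^ 2 ≤ ‖w‖ ^ 2 := by gcongr
  rw [mul_one_div, Complex.div_re, ← add_div, div_le_div_iff₀ h0 (by norm_num)]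
  simp only [Complex.sq_norm, Complex.normSq_apply] at *
  simp
  nlinarith

lemma le_re_div (z w : ℂ) (hz : z ≠ w) (h : ‖w‖ ≤ ‖z‖) :
    1 / (1 + ‖w‖ / ‖z‖) ≤ (z * (1 / (z - w))).re := by
  have h0 : 0 < Complex.normSq (z - w) := Complex.normSq_pos.2 (sub_ne_zero.2 hz)
  have hz0 : 0 < ‖z‖ := by
    rcases (norm_nonneg z).eq_or_lt with h1 | h1
    · exfalso
      rw [← h1] at h
      have h2 : w = 0 := norm_le_zero_iff.1 h
      have h3 : z = 0 := norm_eq_zero.1 h1.symm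
      exact hz (h3.trans h2.symm)
    · exact h1
  have hr : -(‖z‖ * ‖w‖) ≤ z.re * w.re + z.im * w.im := by
    have := Complex.abs_re_le_norm (z * (starRingEnd ℂ) w)
    rw [norm_mul, RCLike.norm_conj] at this
    have := (abs_le.1 this).1
    simpa using this
  have e : 1 / (1 + ‖w‖ / ‖z‖) = ‖z‖ / (‖z‖ + ‖w‖) := by field_simp
  rw [e, mul_one_div, Complex.div_re, ← add_div, div_le_div_iff₀ (by positivity) h0]
  have hz2 : z.re * z.re + z.im * z.im = ‖z‖ ^ 2 := by
    rw [Complex.sq_norm, Complex.normSq_apply]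
  have hw2 : w.re * w.re + w.im * w.im = ‖w‖ ^ 2 := by
    rw [Complex.sq_norm, Complex.normSq_apply]
  have e1 : z.re * (z - w).re + z.im * (z - w).im = ‖z‖ ^ 2 - (z.re * w.re + z.im * w.im) := by
    rw [← hz2]; simp; ring
  have e2 : Complex.normSq (z - w) = ‖z‖ ^ 2 - 2 * (z.re * w.re + z.im * w.im) + ‖w‖ ^ 2 := by
    rw [← hz2, ← hw2, Complex.normSq_apply]; simp; ring
  rw [e1, e2]
  generalize z.re * w.re + z.im * w.im = ρ at *
  have := mul_nonneg (sub_nonneg.2 h) (by linarith : 0 ≤ ‖z‖ * ‖w‖ + ρ)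
  nlinarith

lemma re_logderiv (p : ℂ[X]) (z : ℂ) (hz : p.eval z ≠ 0) :
    (z * p.derivative.eval z / p.eval z).re =
      (p.roots.map fun w => (z * (1 / (z - w))).re).sum := by
  rw [mul_div_assoc, (IsAlgClosed.splits p).eval_derivative_div_eval_of_ne_zero hz,
    ← Multiset.sum_map_mul_left]
  have := map_multiset_sum Complex.reAddGroupHom (p.roots.map fun w => (z * (1 / (z - w))))
  rw [Multiset.map_map] at this
  exact this

lemma norm_deriv_le (n : ℕ) (p : ℂ[X]) (hp : p.natDegree ≤ n)
    (hr : ∀ w, p.IsRoot w → 1 ≤ ‖w‖) (z : ℂ) (hz : ‖z‖ = 1) :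
    ‖z * p.derivative.eval z‖ ≤ ‖n * p.eval z - z * p.derivative.eval z‖ := by
  by_cases h0 : p.eval z = 0
  · simp [h0]
  set Y := z * p.derivative.eval z / p.eval z with hY
  have h1 : Y.re ≤ n / 2 := by
    rw [hY, re_logderiv p z h0]
    have : (p.roots.map fun w => (z * (1 / (z - w))).re).sum ≤
        (p.roots.map fun _ => (1 / 2 : ℝ)).sum := by
      apply Multiset.sum_map_le_sum_map
      intro w hw
      have hw' := isRoot_of_mem_roots hw
      apply re_div_le
      · rintro rfl; exact h0 hw'
      · rw [hz]; exact hr w hw'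
    refine this.trans ?_
    rw [Multiset.map_const', Multiset.sum_replicate, nsmul_eq_mul]
    have : (p.roots.card : ℝ) ≤ n := by exact_mod_cast (card_roots' p).trans hp
    linarith
  have h2 : ‖Y‖ ≤ ‖(n : ℂ) - Y‖ := by
    apply (sq_le_sq₀ (norm_nonneg _) (norm_nonneg _)).1
    simp only [Complex.sq_norm, Complex.normSq_apply]
    simp
    have : (0 : ℝ) ≤ n := by positivity
    nlinarith
  have e1 : z * p.derivative.eval z = Y * p.eval z := by rw [hY]; field_simp
  have e2 : n * p.eval z - z * p.derivative.eval z = ((n : ℂ) - Y) * p.eval z := by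
    rw [e1]; ring
  rw [e2, e1, norm_mul, norm_mul]
  gcongr

lemma norm_le_disc (p : ℂ[X]) (M : ℝ) (hM : ∀ z : ℂ, ‖z‖ = 1 → ‖p.eval z‖ ≤ M)
    (z : ℂ) (hz : ‖z‖ ≤ 1) : ‖p.eval z‖ ≤ M := by
  have := Complex.norm_le_of_forall_mem_frontier_norm_le (f := fun z => p.eval z)
    (U := Metric.ball (0 : ℂ) 1) (C := M) Metric.isBounded_ball
    p.differentiable.diffContOnCl (z := z) ?_ ?_
  · exact this
  · intro u hu
    rw [frontier_ball _ one_ne_zero] at hu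
    exact hM u (by simpa using hu)
  · rw [closure_ball _ one_ne_zero]; simpa using hz

/-- Erdos-Lax. -/
lemma erdos_lax (n : ℕ) (hn : 0 < n) (p : ℂ[X]) (hp : p.natDegree ≤ n)
    (hr : ∀ w, p.IsRoot w → 1 ≤ ‖w‖) (M : ℝ)
    (hM : ∀ z : ℂ, ‖z‖ = 1 → ‖p.eval z‖ ≤ M) (z : ℂ) (hz : ‖z‖ = 1) :
    ‖p.derivative.eval z‖ ≤ n / 2 * M := by
  have hn' : (0 : ℝ) < n := by exact_mod_cast hn
  have hM0 : 0 ≤ M := (norm_nonneg _).trans (hM z hz)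
  have hA : ‖z * p.derivative.eval z‖ = ‖p.derivative.eval z‖ := by simp [hz]
  have h1 := norm_deriv_le n p hp hr z hz
  set A := z * p.derivative.eval z with hAdef
  set B := n * p.eval z - A with hB
  have key : ∀ c : ℂ, M < ‖c‖ → ‖A‖ ≤ ‖B - n * c‖ := by
    intro c hc
    have := norm_deriv_le n (p - C c) (by compute_degree!) ?_ z hz
    · simp only [derivative_sub, derivative_C, sub_zero, eval_sub, eval_C] at this
      rw [← hAdef] at this
      convert this using 2
      rw [hB]; ring
    · intro w hw
      by_contra hcon
      push Not at hcon
      have h2 : p.eval w = c := by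
        have : (p - C c).eval w = 0 := hw
        simpa [sub_eq_zero] using this
      have := norm_le_disc p M hM w hcon.le
      rw [h2] at this
      linarith
  obtain ⟨v, hv, hBv⟩ : ∃ v : ℂ, ‖v‖ = 1 ∧ B = ‖B‖ * v := by
    by_cases hB0 : B = 0
    · exact ⟨1, by simp, by simp [hB0]⟩
    · have h3 : ‖B‖ ≠ 0 := by simpa using hB0
      have h3' : (‖B‖ : ℂ) ≠ 0 := by exact_mod_cast h3
      refine ⟨B / ‖B‖, ?_, by field_simp⟩
      rw [norm_div, Complex.norm_real, norm_norm, div_self h3]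
  have key2 : ∀ t : ℝ, M < t → ‖A‖ ≤ |‖B‖ - n * t| := by
    intro t ht
    have ht0 : 0 ≤ t := by linarith
    have := key (t * v) (by simpa [hv, abs_of_nonneg ht0] using ht)
    have e : B - n * (t * v) = ((‖B‖ - n * t : ℝ) : ℂ) * v := by
      conv_lhs => rw [hBv]
      push_cast; ring
    rwa [e, norm_mul _ v, hv, mul_one, Complex.norm_real, Real.norm_eq_abs] at this
  have hBM : ‖B‖ ≤ n * M := by
    by_contra hcon
    push Not at hcon
    have := key2 (‖B‖ / n) (by rw [lt_div_iff₀ hn']; linarith)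
    rw [mul_div_cancel₀ _ hn'.ne', sub_self, abs_zero] at this
    have hA0 : A = 0 := norm_le_zero_iff.1 this
    have : ‖B‖ = n * ‖p.eval z‖ := by rw [hB, hA0]; simp
    have := mul_le_mul_of_nonneg_left (hM z hz) hn'.le
    linarith
  rw [← hA]
  have : ∀ t : ℝ, M < t → ‖A‖ ≤ n / 2 * t := by
    intro t ht
    have h4 := key2 t ht
    have h5 : n * M ≤ n * t := by gcongr
    rw [abs_of_nonpos (by linarith)] at h4
    linarith
  by_contra hcon
  push Not at hcon
  have h6 : M < 2 * ‖A‖ / n := by rw [lt_div_iff₀ hn']; linarith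
  obtain ⟨t, ht1, ht2⟩ := exists_between h6
  have := this t ht1
  rw [lt_div_iff₀ hn'] at ht2
  linarith

lemma sum_ge (s : Multiset ℝ) (h : ∀ x ∈ s, 0 ≤ x ∧ x ≤ 1) :
    (0 ≤ s.prod ∧ s.prod ≤ 1) ∧
    (s.card + (1 - s.prod) / (1 + s.prod)) / 2 ≤ (s.map fun x => 1 / (1 + x)).sum := by
  induction s using Multiset.induction_on with
  | empty => simp
  | cons a s ih =>
    obtain ⟨⟨h1, h2⟩, h3⟩ := ih fun x hx => h x (Multiset.mem_cons_of_mem hx)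
    obtain ⟨ha0, ha1⟩ := h a (Multiset.mem_cons_self _ _)
    simp only [Multiset.prod_cons, Multiset.card_cons, Multiset.map_cons, Multiset.sum_cons]
    refine ⟨⟨mul_nonneg ha0 h1, mul_le_one₀ ha1 h1 h2⟩, ?_⟩
    push_cast
    generalize s.prod = y at *
    have e : (1 - a * y) / (1 + a * y) ≤ (1 - a) / (1 + a) + (1 - y) / (1 + y) := by
      rw [div_add_div _ _ (by positivity) (by positivity), div_le_div_iff₀ (by positivity) (by positivity)]
      have : 0 ≤ (1 - a) * (1 - y) * (1 - a * y) := by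
        have := mul_le_one₀ ha1 h1 h2
        apply mul_nonneg (mul_nonneg _ _) <;> linarith
      nlinarith [mul_nonneg ha0 h1]
    have e2 : 1 / (1 + a) = (1 + (1 - a) / (1 + a)) / 2 := by field_simp; ring
    rw [e2]
    linarith

/-- Dubinin. -/
lemma dubinin (p : ℂ[X]) (hp : p ≠ 0) (k : ℝ) (hk : 0 < k)
    (hr : ∀ w, p.IsRoot w → ‖w‖ ≤ k) (z : ℂ) (hz : ‖z‖ = k) :
    (p.natDegree + (k ^ p.natDegree * ‖p.leadingCoeff‖ - ‖p.coeff 0‖) /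
      (k ^ p.natDegree * ‖p.leadingCoeff‖ + ‖p.coeff 0‖)) / 2 * ‖p.eval z‖ ≤
      k * ‖p.derivative.eval z‖ := by
  by_cases h0 : p.eval z = 0
  · simp [h0]; positivity
  have hs := IsAlgClosed.splits p
  have hcard : p.roots.card = p.natDegree := hs.natDegree_eq_card_roots.symm
  have hl : 0 < ‖p.leadingCoeff‖ := by simpa using hp
  have h1 := sum_ge (p.roots.map fun w => ‖w‖ / k) (by
    intro x hx
    obtain ⟨w, hw, rfl⟩ := Multiset.mem_map.1 hx
    exact ⟨by positivity, (div_le_one hk).2 (hr w (isRoot_of_mem_roots hw))⟩)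
  obtain ⟨-, h1⟩ := h1
  have hprod : (p.roots.map fun w => ‖w‖ / k).prod =
      ‖p.coeff 0‖ / (k ^ p.natDegree * ‖p.leadingCoeff‖) := by
    have h2 := congrArg norm hs.coeff_zero_eq_leadingCoeff_mul_prod_roots
    rw [norm_mul, norm_mul, norm_pow, norm_neg, norm_one, one_pow, one_mul] at h2
    have h3 : ‖p.roots.prod‖ = (p.roots.map fun w => ‖w‖).prod := by
      exact map_multiset_prod (normHom : ℂ →*₀ ℝ) p.roots
    rw [Multiset.prod_map_div, Multiset.map_const', Multiset.prod_replicate, hcard, ← h3, h2]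
    field_simp
  rw [Multiset.card_map, hcard, hprod, Multiset.map_map] at h1
  have h4 : ((p.roots.map ((fun x : ℝ => 1 / (1 + x)) ∘ fun w : ℂ => ‖w‖ / k))).sum ≤
      (z * p.derivative.eval z / p.eval z).re := by
    rw [re_logderiv p z h0]
    apply Multiset.sum_map_le_sum_map
    intro w hw
    have hw' := isRoot_of_mem_roots hw
    simp only [Function.comp, ← hz]
    apply le_re_div
    · rintro rfl; exact h0 hw'
    · rw [hz]; exact hr w hw'
  have h5 := (h1.trans h4).trans (Complex.re_le_norm _)
  rw [norm_div, norm_mul, hz, le_div_iff₀ (by simpa using h0)] at h5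
  have e : (1 - ‖p.coeff 0‖ / (k ^ p.natDegree * ‖p.leadingCoeff‖)) /
      (1 + ‖p.coeff 0‖ / (k ^ p.natDegree * ‖p.leadingCoeff‖)) =
      (k ^ p.natDegree * ‖p.leadingCoeff‖ - ‖p.coeff 0‖) /
      (k ^ p.natDegree * ‖p.leadingCoeff‖ + ‖p.coeff 0‖) := by
    have : 0 < k ^ p.natDegree * ‖p.leadingCoeff‖ := by positivity
    generalize k ^ p.natDegree * ‖p.leadingCoeff‖ = Y at *
    field_simp
  rwa [e] at h5

/-- Refined Ankeny-Rivlin. -/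
lemma ankeny_rivlin (d : ℕ) (q : ℂ[X]) (hq : q.natDegree ≤ d + 3)
    (hr : ∀ w, q.IsRoot w → 1 ≤ ‖w‖) (M : ℝ)
    (hM : ∀ z : ℂ, ‖z‖ = 1 → ‖q.eval z‖ ≤ M) (z : ℂ) (hz : ‖z‖ = 1) (R : ℝ) (hR : 1 ≤ R) :
    ‖q.eval (R * z)‖ ≤ (R ^ (d + 3) + 1) / 2 * M -
      ‖q.coeff 1‖ * ((R ^ (d + 3) - 1) / (d + 3) - (R ^ (d + 1) - 1) / (d + 1)) := by
  have hel := erdos_lax (d + 3) (by omega) q hq hr M hM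
  have hqd : q.derivative.natDegree ≤ d + 2 := (natDegree_derivative_le q).trans (by omega)
  have hgr := growth d q.derivative hqd _ hel
  have hc0 : q.derivative.coeff 0 = q.coeff 1 := by simp [coeff_derivative]
  rw [hc0] at hgr
  have hd : ∀ x : ℝ, HasDerivAt (fun t : ℝ => q.eval ((t : ℂ) * z))
      (q.derivative.eval ((x : ℂ) * z) * z) x := by
    intro x
    have h1 : HasDerivAt (fun t : ℂ => t * z) z (x : ℂ) := by
      simpa using (hasDerivAt_id (x : ℂ)).mul_const z
    have h2 := (q.hasDerivAt ((x : ℂ) * z)).comp (x : ℂ) h1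
    exact h2.comp_ofReal
  have hB : ∀ x : ℝ, HasDerivAt (fun t : ℝ => (t ^ (d + 3) + 1) / 2 * M -
      ‖q.coeff 1‖ * ((t ^ (d + 3) - 1) / (d + 3) - (t ^ (d + 1) - 1) / (d + 1)))
      (x ^ (d + 2) * ((d + 3) / 2 * M) - (x ^ (d + 2) - x ^ d) * ‖q.coeff 1‖) x := by
    intro x
    have h1 := ((((hasDerivAt_pow (d + 3) x).add_const 1).div_const 2).mul_const M).sub
      (((((hasDerivAt_pow (d + 3) x).sub_const 1).div_const ((d : ℝ) + 3)).sub
        (((hasDerivAt_pow (d + 1) x).sub_const 1).div_const ((d : ℝ) + 1))).const_mul ‖q.coeff 1‖)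
    refine HasDerivAt.congr_deriv (f := _) h1 ?_
    have : (d : ℝ) + 3 ≠ 0 := by positivity
    have : (d : ℝ) + 1 ≠ 0 := by positivity
    rw [show d + 3 - 1 = d + 2 from rfl, show d + 1 - 1 = d from rfl]
    push_cast
    field_simp
  have := image_norm_le_of_norm_deriv_right_le_deriv_boundary (a := 1) (b := R)
    (f := fun t : ℝ => q.eval ((t : ℂ) * z))
    (fun x _ => (hd x).continuousAt.continuousWithinAt)
    (fun x _ => (hd x).hasDerivWithinAt) (by simpa using hM z hz) hB
    (fun x hx => by
      have hx1 : 1 ≤ x := hx.1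
      have hn : ‖(x : ℂ) * z‖ = x := by
        simp [hz, abs_of_nonneg (by linarith : 0 ≤ x)]
      have := hgr ((x : ℂ) * z) (by rw [hn]; exact hx1)
      rw [hn] at this
      rw [norm_mul, hz, mul_one]
      push_cast at this
      exact this)
  exact this ⟨hR, le_rfl⟩

lemma norm_le_maxMod (P : ℂ[X]) (r : ℝ) (z : ℂ) (hz : ‖z‖ = r) : ‖P.eval z‖ ≤ maxMod P r := by
  have hb : BddAbove (Set.range fun z : sphere (0 : ℂ) r => ‖P.eval (z : ℂ)‖) := by
    have hc : Continuous fun z : sphere (0 : ℂ) r => ‖P.eval (z : ℂ)‖ := by fun_prop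
    exact (isCompact_range hc).bddAbove
  exact le_ciSup hb ⟨z, by simpa using hz⟩

lemma maxMod_le (P : ℂ[X]) (r : ℝ) (hr : 0 ≤ r) (c : ℝ)
    (h : ∀ z : ℂ, ‖z‖ = r → ‖P.eval z‖ ≤ c) : maxMod P r ≤ c := by
  have : Nonempty (sphere (0 : ℂ) r) := ⟨⟨(r : ℂ), by simp [abs_of_nonneg hr]⟩⟩
  exact ciSup_le fun z => h z (by simpa using z.2)

theorem stmt_0 (n : ℕ) (hn : 2 < n) (P : Polynomial ℂ) (hdeg : P.natDegree = n)
    (k : ℝ) (hk : 1 ≤ k) (hroots : ∀ w : ℂ, P.IsRoot w → ‖w‖ ≤ k) :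
    maxMod (Polynomial.derivative P) 1 ≥
      (1 / (1 + k ^ n)) *
          ((n : ℝ) + (k ^ n * ‖P.coeff n‖ - ‖P.coeff 0‖) /
              (k ^ n * ‖P.coeff n‖ + ‖P.coeff 0‖)) *
          maxMod P 1 +
        (‖P.coeff (n - 1)‖ / (k * (1 + k ^ n))) *
          ((n : ℝ) + (k ^ n * ‖P.coeff n‖ - ‖P.coeff 0‖) /
              (k ^ n * ‖P.coeff n‖ + ‖P.coeff 0‖)) *
          ((k ^ n - 1) / (n : ℝ) - (k ^ (n - 2) - 1) / ((n : ℝ) - 2)) +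
        ‖P.coeff 1‖ * (1 - 1 / k ^ 2) := by
  obtain ⟨d, rfl⟩ : ∃ d, n = d + 3 := ⟨n - 3, by omega⟩
  have hk0 : 0 < k := by linarith
  have hkC : (k : ℂ) ≠ 0 := by exact_mod_cast hk0.ne'
  have hP0 : P ≠ 0 := by rintro rfl; simp at hdeg
  have hlc : P.leadingCoeff = P.coeff (d + 3) := by rw [leadingCoeff, hdeg]
  have hlead : P.coeff (d + 3) ≠ 0 := by rw [← hlc]; simpa using hP0
  have hl : 0 < ‖P.coeff (d + 3)‖ := by simpa using hlead
  have hdub := dubinin P hP0 k hk0 hroots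
  rw [hdeg, hlc] at hdub
  set S : ℝ := ((d + 3 : ℕ) : ℝ) + (k ^ (d + 3) * ‖P.coeff (d + 3)‖ - ‖P.coeff 0‖) /
      (k ^ (d + 3) * ‖P.coeff (d + 3)‖ + ‖P.coeff 0‖) with hS
  have hSpos : 0 < S := by
    have : -1 ≤ (k ^ (d + 3) * ‖P.coeff (d + 3)‖ - ‖P.coeff 0‖) /
      (k ^ (d + 3) * ‖P.coeff (d + 3)‖ + ‖P.coeff 0‖) := by
      have h1 : 0 < k ^ (d + 3) * ‖P.coeff (d + 3)‖ := by positivity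
      rw [le_div_iff₀ (by positivity)]
      linarith
    rw [hS]; push_cast
    have : (0 : ℝ) ≤ d := by positivity
    linarith
  set M' := maxMod (derivative P) 1
  set M := maxMod P 1
  set K := maxMod P k
  -- step 1
  have h1 : S / 2 * K ≤ k ^ (d + 3) * M' - (k ^ (d + 3) - k ^ (d + 1)) * ‖P.coeff 1‖ := by
    have hgr := growth d P.derivative ((natDegree_derivative_le P).trans (by omega)) M'
      (fun z hz => norm_le_maxMod _ 1 z hz)
    have : K ≤ (k ^ (d + 3) * M' - (k ^ (d + 3) - k ^ (d + 1)) * ‖P.coeff 1‖) / (S / 2) := by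
      apply maxMod_le _ _ hk0.le
      intro z hz
      rw [le_div_iff₀ (by positivity)]
      have h2 := hdub z hz
      have h3 := hgr z (by rw [hz]; exact hk)
      have hc0 : P.derivative.coeff 0 = P.coeff 1 := by simp [coeff_derivative]
      rw [hz, hc0] at h3
      have h4 := mul_le_mul_of_nonneg_left h3 hk0.le
      calc _ = S / 2 * ‖P.eval z‖ := by ring
        _ ≤ _ := h2.trans h4
        _ = _ := by ring
    rw [le_div_iff₀ (by positivity)] at this
    linarith
  -- step 2
  set L : ℝ := (k ^ (d + 3) - 1) / (d + 3) - (k ^ (d + 1) - 1) / (d + 1) with hL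
  have h2 : k ^ (d + 3) * M ≤ (k ^ (d + 3) + 1) / 2 * K -
      k ^ (d + 2) * ‖P.coeff (d + 2)‖ * L := by
    set T := P.comp (C (k : ℂ) * X) with hT
    have hTd : T.natDegree ≤ d + 3 := by
      rw [hT]
      refine natDegree_comp_le.trans ?_
      rw [hdeg]
      have : (C (k : ℂ) * X).natDegree ≤ 1 := by compute_degree
      nlinarith
    have hTe : ∀ z, T.eval z = P.eval (k * z) := by intro z; simp [hT]
    set q := reflect (d + 3) T with hq
    have hqd : q.natDegree ≤ d + 3 := natDegree_reflect_le.trans (by simp [hTd])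
    have hqe : ∀ z, z ≠ 0 → q.eval z = z ^ (d + 3) * P.eval (k * z⁻¹) := by
      intro z hz
      rw [hq, eval_reflect_inv _ _ hTd _ hz, hTe]
    have hqr : ∀ w, q.IsRoot w → 1 ≤ ‖w‖ := by
      intro w hw
      have hw' : q.eval w = 0 := hw
      by_cases hw0 : w = 0
      · exfalso
        rw [hw0, ← coeff_zero_eq_eval_zero, hq, coeff_reflect, revAt_le (Nat.zero_le _), hT,
          comp_C_mul_X_coeff] at hw'
        exact mul_ne_zero hlead (pow_ne_zero _ hkC) hw'
      · rw [hqe w hw0] at hw'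
        have h3 := hroots _ ((mul_eq_zero.1 hw').resolve_left (pow_ne_zero _ hw0))
        rw [norm_mul, norm_inv, Complex.norm_real, Real.norm_of_nonneg hk0.le] at h3
        have h4 : ‖w‖⁻¹ ≤ 1 := by
          by_contra hcon
          push Not at hcon
          nlinarith
        have h5 : 0 < ‖w‖ := by simpa using hw0
        exact (inv_le_one₀ h5).1 h4
    have hqM : ∀ z : ℂ, ‖z‖ = 1 → ‖q.eval z‖ ≤ K := by
      intro z hz
      have hz0 : z ≠ 0 := by rintro rfl; simp at hz
      rw [hqe z hz0, norm_mul, norm_pow, hz, one_pow, one_mul]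
      exact norm_le_maxMod _ _ _ (by simp [hz, abs_of_pos hk0])
    have hc1 : ‖q.coeff 1‖ = k ^ (d + 2) * ‖P.coeff (d + 2)‖ := by
      rw [hq, coeff_reflect, revAt_le (by omega), hT, comp_C_mul_X_coeff, norm_mul, norm_pow,
        Complex.norm_real, Real.norm_of_nonneg hk0.le, mul_comm]
      rfl
    have har := ankeny_rivlin d q hqd hqr K hqM
    have : M ≤ ((k ^ (d + 3) + 1) / 2 * K -
      k ^ (d + 2) * ‖P.coeff (d + 2)‖ * L) / k ^ (d + 3) := by
      apply maxMod_le _ _ zero_le_one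
      intro z hz
      rw [le_div_iff₀ (by positivity)]
      have hz0 : z ≠ 0 := by rintro rfl; simp at hz
      have h3 := har z⁻¹ (by simp [hz]) k hk
      rw [hc1, hqe _ (mul_ne_zero hkC (inv_ne_zero hz0))] at h3
      have e : (k : ℂ) * ((k : ℂ) * z⁻¹)⁻¹ = z := by field_simp
      rw [e] at h3
      simp only [norm_mul, norm_pow, norm_inv, hz, Complex.norm_real,
        Real.norm_of_nonneg hk0.le, inv_one, mul_one] at h3
      rw [mul_comm]
      exact h3
    rw [le_div_iff₀ (by positivity)] at this
    linarith
  -- combination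
  have e1 : d + 3 - 1 = d + 2 := rfl
  have e2 : d + 3 - 2 = d + 1 := rfl
  rw [e1, e2]
  have e3 : (k ^ (d + 3) - 1) / ((d + 3 : ℕ) : ℝ) - (k ^ (d + 1) - 1) / (((d + 3 : ℕ) : ℝ) - 2) = L := by
    rw [hL]; push_cast; congr 2; ring
  rw [e3]
  generalize ‖P.coeff (d + 2)‖ = A at *
  have hp : 0 < k ^ (d + 3) := by positivity
  have h3 : S * (k ^ (d + 3) * M + k ^ (d + 2) * A * L) ≤
      (k ^ (d + 3) + 1) * (k ^ (d + 3) * M' - (k ^ (d + 3) - k ^ (d + 1)) * ‖P.coeff 1‖) := by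
    have h4 := mul_le_mul_of_nonneg_left h2 hSpos.le
    have h5 := mul_le_mul_of_nonneg_left h1 (by positivity : 0 ≤ k ^ (d + 3) + 1)
    linarith
  have h6 : 0 < k ^ (d + 3) * (k ^ (d + 3) + 1) := by positivity
  have e4 : 1 / (1 + k ^ (d + 3)) * S * M + A / (k * (1 + k ^ (d + 3))) * S * L +
      ‖P.coeff 1‖ * (1 - 1 / k ^ 2) = (S * (k ^ (d + 3) * M + k ^ (d + 2) * A * L) +
      (k ^ (d + 3) + 1) * ((k ^ (d + 3) - k ^ (d + 1)) * ‖P.coeff 1‖)) /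
        (k ^ (d + 3) * (k ^ (d + 3) + 1)) := by
    have h7 : 1 + k ^ (d + 3) ≠ 0 := by positivity
    have h8 : k ^ (d + 3) + 1 ≠ 0 := by positivity
    rw [eq_div_iff h6.ne']
    field_simp
    ring
  rw [ge_iff_le, e4, div_le_iff₀ h6]
  linarith
end

section
/- Let P(z) = a_0 + a_1 z + a_2 z^2 be a complex polynomial of degree 2 all of whose zeros lie in |z| ≤ k with k ≥ 1. Then max_{|z|=1}|P′(z)| ≥ (1/(1+k^2))·(2 + (k^2|a_2| − |a_0|)/(k^2|a_2| + |a_0|))·max_{|z|=1}|P(z)| + (|a_1|/(k(1+k^2)))·(2 + (k^2|a_2| − |a_0|)/(k^2|a_2| + |a_0|))·((k−1)^2/2) + |a_1|·(1 − 1/k). -/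
open Polynomial Metric

theorem aux_real (A B c k : ℝ) (hA : 0 < A) (hc : 0 ≤ c) (hk : 1 ≤ k)
    (hB : k * B ≤ k ^ 2 * A + c) (hcA : c ≤ k ^ 2 * A) :
    (1 / (1 + k ^ 2)) * (2 + (k ^ 2 * A - c) / (k ^ 2 * A + c)) * (A + B + c) +
      (B / (k * (1 + k ^ 2))) * (2 + (k ^ 2 * A - c) / (k ^ 2 * A + c)) * ((k - 1) ^ 2 / 2) +
      B * (1 - 1 / k) ≤ 2 * A + B := by
  have hk0 : 0 < k := by linarith
  have hD : 0 < k ^ 2 * A + c := by positivity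
  have key : 2 * A + B - ((1 / (1 + k ^ 2)) * (2 + (k ^ 2 * A - c) / (k ^ 2 * A + c)) * (A + B + c) +
      (B / (k * (1 + k ^ 2))) * (2 + (k ^ 2 * A - c) / (k ^ 2 * A + c)) * ((k - 1) ^ 2 / 2) +
      B * (1 - 1 / k)) = (k ^ 2 * A - c) / (k ^ 2 * A + c) *
        (((2 * k ^ 2 - 1) * A + c) / (1 + k ^ 2) - B / (2 * k)) := by
    field_simp
    ring
  have h1 : B / (2 * k) ≤ ((2 * k ^ 2 - 1) * A + c) / (1 + k ^ 2) := by
    have e : B / (2 * k) ≤ (k ^ 2 * A + c) / (2 * k ^ 2) := by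
      rw [div_le_div_iff₀ (by positivity) (by positivity)]
      nlinarith
    refine e.trans ?_
    rw [div_le_div_iff₀ (by positivity) (by positivity)]
    have hk2 : 0 ≤ k ^ 2 - 1 := by nlinarith
    have p1 : 0 ≤ (k ^ 2 - 1) * (3 * k ^ 2 * A + c) := by positivity
    nlinarith
  have h2 : 0 ≤ (k ^ 2 * A - c) / (k ^ 2 * A + c) *
        (((2 * k ^ 2 - 1) * A + c) / (1 + k ^ 2) - B / (2 * k)) :=
    mul_nonneg (div_nonneg (by linarith) hD.le) (by linarith)
  linarith

theorem aux_unit (a : ℂ) : ∃ u : ℂ, ‖u‖ = 1 ∧ a = ‖a‖ * u := by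
  by_cases h : a = 0
  · exact ⟨1, by simp, by simp [h]⟩
  · have h' : (‖a‖ : ℂ) ≠ 0 := by simpa using h
    refine ⟨a / ‖a‖, ?_, by field_simp⟩
    have : ‖a‖ ≠ 0 := by simpa using h
    simp [this]

theorem stmt_1 (a₀ a₁ a₂ : ℂ) (ha₂ : a₂ ≠ 0) (P : Polynomial ℂ)
    (hP : P = C a₀ + C a₁ * X + C a₂ * X ^ 2)
    (k : ℝ) (hk : 1 ≤ k) (hroots : ∀ w : ℂ, P.IsRoot w → ‖w‖ ≤ k) :
    maxMod (Polynomial.derivative P) 1 ≥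
      (1 / (1 + k ^ 2)) *
          (2 + (k ^ 2 * ‖a₂‖ - ‖a₀‖) /
              (k ^ 2 * ‖a₂‖ + ‖a₀‖)) *
          maxMod P 1 +
        (‖a₁‖ / (k * (1 + k ^ 2))) *
          (2 + (k ^ 2 * ‖a₂‖ - ‖a₀‖) /
              (k ^ 2 * ‖a₂‖ + ‖a₀‖)) *
          ((k - 1) ^ 2 / 2) +
        ‖a₁‖ * (1 - 1 / k) := by
  have hA : 0 < ‖a₂‖ := norm_pos_iff.mpr ha₂
  obtain ⟨s, hs⟩ := IsAlgClosed.exists_pow_nat_eq (a₁ ^ 2 - 4 * a₂ * a₀) (n := 2) (by norm_num)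
  obtain ⟨z, hz⟩ : ∃ z, z = (-a₁ + s) / (2 * a₂) := ⟨_, rfl⟩
  obtain ⟨w, hw⟩ : ∃ w, w = (-a₁ - s) / (2 * a₂) := ⟨_, rfl⟩
  have e1 : a₁ = -(a₂ * (z + w)) := by rw [hz, hw]; field_simp; ring
  have e0 : a₀ = a₂ * (z * w) := by
    rw [hz, hw]; field_simp; linear_combination hs
  have hzk : ‖z‖ ≤ k := hroots z (by rw [hP, IsRoot.def]; simp; rw [e1, e0]; ring)
  have hwk : ‖w‖ ≤ k := hroots w (by rw [hP, IsRoot.def]; simp; rw [e1, e0]; ring)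
  have n0 : ‖a₀‖ = ‖a₂‖ * (‖z‖ * ‖w‖) := by rw [e0, norm_mul, norm_mul]
  have n1 : ‖a₁‖ ≤ ‖a₂‖ * (‖z‖ + ‖w‖) := by
    rw [e1, norm_neg, norm_mul]
    exact mul_le_mul_of_nonneg_left (norm_add_le _ _) hA.le
  have hk0 : 0 < k := by linarith
  have hB : k * ‖a₁‖ ≤ k ^ 2 * ‖a₂‖ + ‖a₀‖ := by
    have h1 := mul_le_mul_of_nonneg_left n1 hk0.le
    have h2 : 0 ≤ ‖a₂‖ * ((k - ‖z‖) * (k - ‖w‖)) :=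
      mul_nonneg hA.le (mul_nonneg (by linarith) (by linarith))
    rw [n0]; nlinarith
  have hcA : ‖a₀‖ ≤ k ^ 2 * ‖a₂‖ := by
    have : ‖z‖ * ‖w‖ ≤ k * k := mul_le_mul hzk hwk (norm_nonneg _) hk0.le
    rw [n0]; nlinarith
  have hM : maxMod P 1 ≤ ‖a₂‖ + ‖a₁‖ + ‖a₀‖ := by
    unfold maxMod
    haveI : Nonempty (sphere (0 : ℂ) 1) := ⟨⟨1, by simp⟩⟩
    refine ciSup_le ?_
    rintro ⟨x, hx⟩
    have hx : ‖x‖ = 1 := by simpa using hx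
    rw [hP]
    simp only [eval_add, eval_mul, eval_C, eval_X, eval_pow]
    refine (norm_add₃_le).trans ?_
    simp [hx]
    linarith
  have hev : ∀ x : ℂ, (derivative P).eval x = a₁ + 2 * a₂ * x := by
    intro x
    rw [hP]
    simp
    ring
  have hM' : 2 * ‖a₂‖ + ‖a₁‖ ≤ maxMod (derivative P) 1 := by
    obtain ⟨u, hu, hu1⟩ := aux_unit a₁
    obtain ⟨v, hv, hv1⟩ := aux_unit a₂
    have hv0 : v ≠ 0 := by rintro rfl; simp at hv
    have hmem : u / v ∈ sphere (0 : ℂ) 1 := by simp [hu, hv]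
    have hle : ‖(derivative P).eval (u / v)‖ ≤ maxMod (derivative P) 1 := by
      unfold maxMod
      refine le_ciSup (f := fun z : sphere (0 : ℂ) 1 => ‖(derivative P).eval (z : ℂ)‖)
        ⟨‖a₁‖ + 2 * ‖a₂‖, ?_⟩ ⟨u / v, hmem⟩
      rintro _ ⟨⟨x, hx⟩, rfl⟩
      have hx : ‖x‖ = 1 := by simpa using hx
      simp only [hev]
      refine (norm_add_le _ _).trans ?_
      simp [hx]
    refine le_trans (le_of_eq ?_) hle
    have : a₁ + 2 * a₂ * (u / v) = ((‖a₁‖ + 2 * ‖a₂‖ : ℝ) : ℂ) * u := by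
      have h2 : a₂ * (u / v) = ‖a₂‖ * u := by
        conv_lhs => rw [hv1]
        field_simp
      push_cast
      linear_combination hu1 + 2 * h2
    rw [hev, this, norm_mul, hu, Complex.norm_real, Real.norm_of_nonneg (by positivity)]
    ring
  have hr := aux_real ‖a₂‖ ‖a₁‖ ‖a₀‖ k hA (norm_nonneg _) hk hB hcA
  have hs0 : 0 ≤ (1 / (1 + k ^ 2)) * (2 + (k ^ 2 * ‖a₂‖ - ‖a₀‖) / (k ^ 2 * ‖a₂‖ + ‖a₀‖)) := by
    have : 0 ≤ (k ^ 2 * ‖a₂‖ - ‖a₀‖) / (k ^ 2 * ‖a₂‖ + ‖a₀‖) :=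
      div_nonneg (by linarith) (by positivity)
    positivity
  have hm := mul_le_mul_of_nonneg_left hM hs0
  linarith
end

section
/- Let P(z) = a_0 + a_1 z + a_2 z^2 be a complex polynomial of degree 2 all of whose zeros lie in |z| ≤ k with k ≥ 1, let m = min_{|z|=k}|P(z)|, and let 0 ≤ l < 1. Then max_{|z|=1}|P′(z)| ≥ (2/(1+k^2))·(max_{|z|=1}|P(z)| + l·m) + (1 − 1/k)|a_1| + (1/(k^2(1+k^2)))·{ ((k^2|a_2| − l·m − |a_0|)/(k^2|a_2| − l·m + |a_0|))·(k^2·max_{|z|=1}|P(z)| − l·m) + k|a_1|·((k−1)^2/2)·(2 + (k^2|a_2| − l·m − |a_0|)/(k^2|a_2| − l·m + |a_0|)) }. -/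
open Polynomial Metric

/-- The minimum of `|P(z)|` over the circle `|z| = r`. -/
noncomputable def minMod (P : Polynomial ℂ) (r : ℝ) : ℝ :=
  ⨅ z : sphere (0 : ℂ) r, ‖P.eval (z : ℂ)‖

lemma aux_real_s3 (k c a A s M L : ℝ) (hk : 1 ≤ k) (ha : 0 ≤ a) (hA : 0 ≤ A)
    (hK : 0 < k ^ 2 * c - s) (haK : a ≤ k ^ 2 * c - s) (hkA : k * A ≤ k ^ 2 * c - s + a)
    (hM : M ≤ c + A + a) (hL : A + 2 * c ≤ L) :
    L ≥ (2 / (1 + k ^ 2)) * (M + s) + (1 - 1 / k) * A +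
        (1 / (k ^ 2 * (1 + k ^ 2))) *
          (((k ^ 2 * c - s - a) / (k ^ 2 * c - s + a)) * (k ^ 2 * M - s) +
            k * A * ((k - 1) ^ 2 / 2) *
              (2 + (k ^ 2 * c - s - a) / (k ^ 2 * c - s + a))) := by
  obtain ⟨K, hKdef⟩ : ∃ K, K = k ^ 2 * c - s := ⟨_, rfl⟩
  have hs : s = k ^ 2 * c - K := by linarith
  rw [← hKdef] at hK haK hkA ⊢
  have hk0 : 0 < k := by linarith
  have hKa : 0 < K + a := by linarith
  obtain ⟨D, hD⟩ : ∃ D, D = (K - a) / (K + a) := ⟨_, rfl⟩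
  rw [← hD]
  have hD0 : 0 ≤ D := by rw [hD]; exact div_nonneg (by linarith) hKa.le
  have hDm : D * (K + a) = K - a := by rw [hD]; field_simp
  have key1 : D * (k * A) ≤ K - a := by
    rw [← hDm]; exact mul_le_mul_of_nonneg_left hkA hD0
  have key2 : D * A / (2 * k) ≤ (K - a) / (2 * k ^ 2) := by
    rw [div_le_div_iff₀ (by positivity) (by positivity)]
    nlinarith [mul_le_mul_of_nonneg_left key1 (by positivity : 0 ≤ 2 * k)]
  have e1 : (2 / (1 + k ^ 2)) * (M + s) + (1 - 1 / k) * A +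
        (1 / (k ^ 2 * (1 + k ^ 2))) * (D * (k ^ 2 * M - s) +
            k * A * ((k - 1) ^ 2 / 2) * (2 + D))
      = A + D * A / (2 * k) + (2 + D) / (1 + k ^ 2) * (M - A)
        + s * (2 * k ^ 2 - D) / (k ^ 2 * (1 + k ^ 2)) := by
    field_simp
    ring
  rw [e1]
  have h3 : (2 + D) / (1 + k ^ 2) * (M - A) ≤ (2 + D) / (1 + k ^ 2) * (c + a) :=
    mul_le_mul_of_nonneg_left (by linarith) (by positivity)
  have e2 : 2 * c - ((K - a) / (2 * k ^ 2) + (2 + D) / (1 + k ^ 2) * (c + a)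
        + s * (2 * k ^ 2 - D) / (k ^ 2 * (1 + k ^ 2)))
      = (k ^ 2 - 1) * (3 * K + a) * (K - a) / (2 * k ^ 2 * (1 + k ^ 2) * (K + a)) := by
    rw [hs, hD]
    field_simp
    ring
  have h4 : 0 ≤ (k ^ 2 - 1) * (3 * K + a) * (K - a) / (2 * k ^ 2 * (1 + k ^ 2) * (K + a)) := by
    have : 0 ≤ k ^ 2 - 1 := by nlinarith
    have : 0 ≤ K - a := by linarith
    positivity
  linarith

lemma aux_quad (a b c : ℂ) (hc : c ≠ 0) (k : ℝ)
    (h : ∀ w : ℂ, a + b * w + c * w ^ 2 = 0 → ‖w‖ ≤ k) :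
    ‖a‖ ≤ k ^ 2 * ‖c‖ ∧ k * ‖b‖ ≤ k ^ 2 * ‖c‖ + ‖a‖ := by
  obtain ⟨d, hd⟩ : ∃ d : ℂ, d ^ 2 = b ^ 2 - 4 * a * c :=
    IsAlgClosed.exists_pow_nat_eq _ (by norm_num)
  obtain ⟨w₁, hw₁⟩ : ∃ w, w = (-b + d) / (2 * c) := ⟨_, rfl⟩
  obtain ⟨w₂, hw₂⟩ : ∃ w, w = (-b - d) / (2 * c) := ⟨_, rfl⟩
  have h1 : ‖w₁‖ ≤ k := h w₁ (by
    rw [hw₁]; field_simp; linear_combination hd)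
  have h2 : ‖w₂‖ ≤ k := h w₂ (by
    rw [hw₂]; field_simp; linear_combination hd)
  have hb : b = -(c * (w₁ + w₂)) := by
    rw [hw₁, hw₂]; field_simp; ring
  have ha : a = c * (w₁ * w₂) := by
    rw [hw₁, hw₂]; field_simp; linear_combination hd
  have hk : 0 ≤ k := (norm_nonneg _).trans h1
  have hna : ‖a‖ = ‖c‖ * (‖w₁‖ * ‖w₂‖) := by rw [ha]; simp
  have hnb : ‖b‖ ≤ ‖c‖ * (‖w₁‖ + ‖w₂‖) := by
    rw [hb, norm_neg, norm_mul]
    gcongr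
    exact norm_add_le _ _
  have hcn := norm_nonneg c
  constructor
  · have := mul_le_mul h1 h2 (norm_nonneg _) hk
    rw [hna]
    nlinarith
  · have h3 := mul_nonneg hcn (mul_nonneg (sub_nonneg.2 h1) (sub_nonneg.2 h2))
    have h4 := mul_le_mul_of_nonneg_left hnb hk
    rw [hna]
    nlinarith

lemma aux_min (a b c : ℂ) (hc : c ≠ 0) (k : ℝ) (hk : 0 < k) (m : ℝ) (hm : 0 < m)
    (h : ∀ w : ℂ, a + b * w + c * w ^ 2 = 0 → ‖w‖ ≤ k)
    (hmin : ∀ w : ℂ, ‖w‖ = k → m ≤ ‖a + b * w + c * w ^ 2‖) (u : ℂ) (hu : ‖u‖ ≤ 1 / k) :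
    m / k ^ 2 ≤ ‖c + b * u + a * u ^ 2‖ := by
  have hq : ∀ v : ℂ, v ≠ 0 → c + b * v + a * v ^ 2 = v ^ 2 * (a + b * v⁻¹ + c * v⁻¹ ^ 2) := by
    intro v hv
    field_simp
    ring
  have hsph : ∀ v : ℂ, ‖v‖ = 1 / k → m / k ^ 2 ≤ ‖c + b * v + a * v ^ 2‖ := by
    intro v hv
    have hv0 : v ≠ 0 := by
      rw [← norm_pos_iff, hv]; positivity
    rw [hq v hv0, norm_mul, norm_pow, hv]
    have := hmin v⁻¹ (by rw [norm_inv, hv]; simp)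
    calc m / k ^ 2 = (1 / k) ^ 2 * m := by ring
      _ ≤ _ := by gcongr
  have hne : ∀ v : ℂ, ‖v‖ ≤ 1 / k → c + b * v + a * v ^ 2 ≠ 0 := by
    intro v hv h0
    by_cases hv0 : v = 0
    · subst hv0; simp at h0; exact hc h0
    have h1 := h v⁻¹ (by
      have := h0; rw [hq v hv0] at this
      simpa [hv0] using this)
    have h2 : ‖v‖ = 1 / k := by
      apply le_antisymm hv
      rw [norm_inv] at h1
      rw [one_div]
      exact inv_le_of_inv_le₀ (by simpa using hv0) h1
    have h3 := hsph v h2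
    rw [h0, norm_zero] at h3
    have : 0 < m / k ^ 2 := by positivity
    linarith
  have hr : (1 / k : ℝ) ≠ 0 := by positivity
  have key := Complex.norm_le_of_forall_mem_frontier_norm_le (U := Metric.ball (0:ℂ) (1 / k))
    (f := fun v => (c + b * v + a * v ^ 2)⁻¹) (C := (m / k ^ 2)⁻¹) (z := u) Metric.isBounded_ball
    (by
      apply DifferentiableOn.diffContOnCl
      rw [closure_ball _ hr]
      apply DifferentiableOn.inv
      · fun_prop
      · intro v hv
        exact hne v (by simpa using hv))
    (by
      intro v hv
      rw [frontier_ball _ hr] at hv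
      simp only [norm_inv]
      apply inv_anti₀ (by positivity)
      exact hsph v (by simpa using hv))
    (by rw [closure_ball _ hr]; simpa using hu)
  simp only [norm_inv] at key
  exact (inv_le_inv₀ (norm_pos_iff.2 (hne u hu)) (by positivity)).1 key

lemma aux_pert (a b c : ℂ) (hc : c ≠ 0) (k : ℝ) (hk : 0 < k) (m : ℝ) (hm : 0 ≤ m)
    (l : ℝ) (hl0 : 0 ≤ l) (hl1 : l < 1)
    (h : ∀ w : ℂ, a + b * w + c * w ^ 2 = 0 → ‖w‖ ≤ k)
    (hmin : ∀ w : ℂ, ‖w‖ = k → m ≤ ‖a + b * w + c * w ^ 2‖) :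
    0 < k ^ 2 * ‖c‖ - l * m ∧ ‖a‖ ≤ k ^ 2 * ‖c‖ - l * m ∧
      k * ‖b‖ ≤ k ^ 2 * ‖c‖ - l * m + ‖a‖ := by
  have hcn : 0 < ‖c‖ := norm_pos_iff.2 hc
  rcases hm.eq_or_lt with hm0 | hm0
  · subst hm0
    have := aux_quad a b c hc k h
    simp only [mul_zero, sub_zero]
    exact ⟨by positivity, this⟩
  have hmc : m / k ^ 2 ≤ ‖c‖ := by
    simpa using aux_min a b c hc k hk m hm0 h hmin 0 (by simp; positivity)
  have hlm : l * m < m := by nlinarith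
  have hpos : 0 < k ^ 2 * ‖c‖ - l * m := by
    rw [div_le_iff₀ (by positivity)] at hmc
    nlinarith
  obtain ⟨t, ht⟩ : ∃ t : ℝ, t = l * m / (k ^ 2 * ‖c‖) := ⟨_, rfl⟩
  have htm : t * ‖c‖ = l * m / k ^ 2 := by rw [ht]; field_simp
  have ht0 : 0 ≤ t := by rw [ht]; positivity
  have ht1 : t < 1 := by
    rw [ht, div_lt_one (by positivity)]; linarith
  have hnt : ‖(1 - t : ℂ)‖ = 1 - t := by
    have : (1 - t : ℂ) = ((1 - t : ℝ) : ℂ) := by push_cast; rfl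
    rw [this, Complex.norm_real, Real.norm_of_nonneg (by linarith)]
  have hc' : c * (1 - t : ℂ) ≠ 0 := by
    rw [← norm_pos_iff, norm_mul, hnt]
    apply mul_pos hcn; linarith
  have hkc : k ^ 2 * ‖c * (1 - t : ℂ)‖ = k ^ 2 * ‖c‖ - l * m := by
    rw [norm_mul, hnt]
    have : k ^ 2 * (t * ‖c‖) = l * m := by rw [htm]; field_simp
    linarith
  have := aux_quad a b (c * (1 - t : ℂ)) hc' k (by
    intro w hw
    by_contra hlt
    push Not at hlt
    have hw0 : w ≠ 0 := by
      rw [← norm_pos_iff]; linarith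
    have h1 := aux_min a b c hc k hk m hm0 h hmin w⁻¹ (by
      rw [norm_inv, ← one_div]
      exact one_div_le_one_div_of_le hk hlt.le)
    have h2 : c + b * w⁻¹ + a * w⁻¹ ^ 2 = c * t := by
      field_simp
      linear_combination hw
    rw [h2, norm_mul, Complex.norm_real, Real.norm_of_nonneg ht0, mul_comm, htm] at h1
    have : l * m / k ^ 2 < m / k ^ 2 := by gcongr
    linarith)
  rw [hkc] at this
  exact ⟨hpos, this⟩

theorem stmt_3 (a₀ a₁ a₂ : ℂ) (ha₂ : a₂ ≠ 0) (P : Polynomial ℂ)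
    (hP : P = C a₀ + C a₁ * X + C a₂ * X ^ 2)
    (k : ℝ) (hk : 1 ≤ k) (hroots : ∀ w : ℂ, P.IsRoot w → ‖w‖ ≤ k)
    (m : ℝ) (hm : m = minMod P k) (l : ℝ) (hl0 : 0 ≤ l) (hl1 : l < 1) :
    maxMod (Polynomial.derivative P) 1 ≥
      (2 / (1 + k ^ 2)) * (maxMod P 1 + l * m) +
        (1 - 1 / k) * ‖a₁‖ +
        (1 / (k ^ 2 * (1 + k ^ 2))) *
          (((k ^ 2 * ‖a₂‖ - l * m - ‖a₀‖) /
                (k ^ 2 * ‖a₂‖ - l * m + ‖a₀‖)) *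
              (k ^ 2 * maxMod P 1 - l * m) +
            k * ‖a₁‖ * ((k - 1) ^ 2 / 2) *
              (2 + (k ^ 2 * ‖a₂‖ - l * m - ‖a₀‖) /
                  (k ^ 2 * ‖a₂‖ - l * m + ‖a₀‖))) := by
  have hev : ∀ w, P.eval w = a₀ + a₁ * w + a₂ * w ^ 2 := by
    intro w; simp [hP]
  have hdev : ∀ w, (Polynomial.derivative P).eval w = a₁ + 2 * a₂ * w := by
    intro w; simp [hP]; ring
  have hm0 : 0 ≤ m := by
    rw [hm]; exact Real.iInf_nonneg fun _ => norm_nonneg _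
  have hmin : ∀ w : ℂ, ‖w‖ = k → m ≤ ‖a₀ + a₁ * w + a₂ * w ^ 2‖ := by
    intro w hw
    rw [hm, ← hev]
    exact ciInf_le (f := fun z : sphere (0 : ℂ) k => ‖P.eval (z : ℂ)‖)
      ⟨0, by rintro _ ⟨z, rfl⟩; exact norm_nonneg _⟩ ⟨w, by simpa using hw⟩
  obtain ⟨h1, h2, h3⟩ := aux_pert a₀ a₁ a₂ ha₂ k (by linarith) m hm0 l hl0 hl1
    (fun w hw => hroots w (by rw [Polynomial.IsRoot, hev, hw])) hmin
  have hne : Nonempty (sphere (0 : ℂ) 1) := ⟨⟨1, by simp⟩⟩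
  have hM : maxMod P 1 ≤ ‖a₂‖ + ‖a₁‖ + ‖a₀‖ := by
    apply ciSup_le
    rintro ⟨z, hz⟩
    have hz : ‖z‖ = 1 := by simpa using hz
    rw [hev]
    have := norm_add₃_le (a := a₀) (b := a₁ * z) (c := a₂ * z ^ 2)
    simp only [norm_mul, norm_pow, hz] at this
    linarith
  have hbdd : BddAbove (Set.range fun z : sphere (0 : ℂ) 1 =>
      ‖(Polynomial.derivative P).eval (z : ℂ)‖) := by
    refine ⟨‖a₁‖ + 2 * ‖a₂‖, ?_⟩
    rintro _ ⟨⟨z, hz⟩, rfl⟩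
    have hz : ‖z‖ = 1 := by simpa using hz
    simp only [hdev]
    have := norm_add_le a₁ (2 * a₂ * z)
    simpa [hz] using this
  have hL : ‖a₁‖ + 2 * ‖a₂‖ ≤ maxMod (Polynomial.derivative P) 1 := by
    have ha₂n : (‖a₂‖ : ℂ) ≠ 0 := by simpa using ha₂
    obtain ⟨e, he, hae⟩ : ∃ e : ℂ, ‖e‖ = 1 ∧ a₁ = ‖a₁‖ * e := by
      by_cases h : a₁ = 0
      · exact ⟨1, by simp, by simp [h]⟩
      · have hn : (‖a₁‖ : ℂ) ≠ 0 := by simpa using h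
        exact ⟨a₁ / ‖a₁‖, by simp [h], by field_simp⟩
    have hz : ‖e * ‖a₂‖ / a₂‖ = 1 := by simp [he, ha₂]
    refine le_trans (le_of_eq ?_) (le_ciSup hbdd ⟨e * ‖a₂‖ / a₂, by simpa using hz⟩)
    simp only [hdev]
    have : a₁ + 2 * a₂ * (e * ‖a₂‖ / a₂) = ((‖a₁‖ + 2 * ‖a₂‖ : ℝ) : ℂ) * e := by
      field_simp
      push_cast
      linear_combination hae
    rw [this, norm_mul, he, Complex.norm_real, Real.norm_of_nonneg (by positivity), mul_one]
  exact aux_real_s3 k ‖a₂‖ ‖a₀‖ ‖a₁‖ (l * m) _ _ hk (norm_nonneg _) (norm_nonneg _) h1 h2 h3 hM hL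
end

section
/- Let P(z) = ∑_{j=0}^{n} a_j z^j be a complex polynomial of degree n ≥ 2 all of whose zeros lie in |z| ≤ 1, let m₁ = min_{|z|=1}|P(z)|, and let 0 ≤ l < 1. Then max_{|z|=1}|P′(z)| ≥ (n/2)·(max_{|z|=1}|P(z)| + l·m₁) + (1/2)·((|a_n| − l·m₁ − |a_0|)/(|a_n| − l·m₁ + |a_0|))·(max_{|z|=1}|P(z)| − l·m₁). -/
open Polynomial Metric

lemma aux_re (z w : ℂ) (hz : ‖z‖ = 1) (hw : ‖w‖ ≤ 1) (hne : z ≠ w) :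
    1 / 2 + 1 / 2 * ((1 - ‖w‖) / (1 + ‖w‖)) ≤ (z * (1 / (z - w))).re := by
  have hz0 : z ≠ 0 := by rintro rfl; simp at hz
  obtain ⟨u, rfl⟩ : ∃ u, w = z * u := ⟨w / z, by field_simp⟩
  have hnu : ‖z * u‖ = ‖u‖ := by rw [norm_mul, hz, one_mul]
  rw [hnu] at hw ⊢
  have hu1 : 1 - u ≠ 0 := by
    intro h
    apply hne
    have : u = 1 := by linear_combination -h
    rw [this, mul_one]
  have e : z * (1 / (z - z * u)) = (1 - u)⁻¹ := by
    have : z - z * u = z * (1 - u) := by ring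
    rw [this]; field_simp
  rw [e, Complex.inv_re]
  have hr : 0 ≤ ‖u‖ := norm_nonneg _
  have hD : 0 < Complex.normSq (1 - u) := Complex.normSq_pos.mpr hu1
  have hDe : Complex.normSq (1 - u) = 1 + ‖u‖ ^ 2 - 2 * u.re := by
    rw [← Complex.normSq_eq_norm_sq, Complex.normSq_apply, Complex.normSq_apply]; simp; ring
  have e2 : 1 / 2 + 1 / 2 * ((1 - ‖u‖) / (1 + ‖u‖)) = 1 / (1 + ‖u‖) := by
    field_simp; ring
  have ha : -‖u‖ ≤ u.re := (abs_le.mp (Complex.abs_re_le_norm u)).1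
  rw [e2, div_le_div_iff₀ (by positivity) hD, hDe, Complex.sub_re, Complex.one_re]
  nlinarith [mul_nonneg (by linarith : 0 ≤ ‖u‖ + u.re) (by linarith : 0 ≤ 1 - ‖u‖)]

lemma aux_xy (x y : ℝ) (hx : 0 ≤ x) (hx1 : x ≤ 1) (hy : 0 ≤ y) (hy1 : y ≤ 1) :
    (1 - x * y) / (1 + x * y) ≤ (1 - x) / (1 + x) + (1 - y) / (1 + y) := by
  have hxy : x * y ≤ 1 := mul_le_one₀ hx1 hy hy1
  have e : (1 - x) / (1 + x) + (1 - y) / (1 + y) = 2 * (1 - x * y) / ((1 + x) * (1 + y)) := by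
    field_simp; ring
  rw [e, div_le_div_iff₀ (by positivity) (by positivity)]
  nlinarith [mul_nonneg (by linarith : 0 ≤ 1 - x * y)
    (mul_nonneg (by linarith : 0 ≤ 1 - x) (by linarith : 0 ≤ 1 - y))]

lemma aux_sum (z : ℂ) (hz : ‖z‖ = 1) (s : Multiset ℂ) (hs : ∀ w ∈ s, ‖w‖ ≤ 1 ∧ z ≠ w) :
    ‖s.prod‖ ≤ 1 ∧
    (s.card : ℝ) / 2 + 1 / 2 * ((1 - ‖s.prod‖) / (1 + ‖s.prod‖)) ≤
      (z * (s.map fun w => 1 / (z - w)).sum).re := by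
  induction s using Multiset.induction with
  | empty => simp
  | cons a s ih =>
    obtain ⟨h1, h2⟩ := ih fun w hw => hs w (Multiset.mem_cons_of_mem hw)
    obtain ⟨h3, h4⟩ := hs a (Multiset.mem_cons_self a s)
    have h5 := aux_re z a hz h3 h4
    have h6 := aux_xy ‖a‖ ‖s.prod‖ (norm_nonneg _) h3 (norm_nonneg _) h1
    rw [Multiset.prod_cons, norm_mul, Multiset.map_cons, Multiset.sum_cons, mul_add,
      Complex.add_re, Multiset.card_cons]
    refine ⟨mul_le_one₀ h3 (norm_nonneg _) h1, ?_⟩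
    push_cast
    linarith

lemma aux_dub (n : ℕ) (F : ℂ[X]) (hF : F ≠ 0) (hdeg : F.natDegree = n)
    (hroots : ∀ w : ℂ, F.IsRoot w → ‖w‖ ≤ 1) (z : ℂ) (hz : ‖z‖ = 1) :
    1 / 2 * (n + (‖F.coeff n‖ - ‖F.coeff 0‖) / (‖F.coeff n‖ + ‖F.coeff 0‖)) * ‖F.eval z‖
      ≤ ‖F.derivative.eval z‖ := by
  by_cases hFz : F.eval z = 0
  · rw [hFz]; simp
  have hsp : F.Splits := IsAlgClosed.splits F
  have hlc : F.coeff n = F.leadingCoeff := by rw [← hdeg]; rfl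
  have hl0 : 0 < ‖F.leadingCoeff‖ := by simpa using hF
  have hcard : F.roots.card = n := by rw [← hdeg]; exact hsp.natDegree_eq_card_roots.symm
  obtain ⟨h1, h2⟩ := aux_sum z hz F.roots fun w hw => by
    have := (mem_roots hF).mp hw
    refine ⟨hroots w this, ?_⟩
    rintro rfl
    exact hFz this
  have h0 : ‖F.coeff 0‖ = ‖F.leadingCoeff‖ * ‖F.roots.prod‖ := by
    rw [hsp.coeff_zero_eq_leadingCoeff_mul_prod_roots]; simp
  have hder := hsp.eval_derivative_div_eval_of_ne_zero hFz
  rw [← hder, hcard] at h2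
  have e : (‖F.coeff n‖ - ‖F.coeff 0‖) / (‖F.coeff n‖ + ‖F.coeff 0‖) =
      (1 - ‖F.roots.prod‖) / (1 + ‖F.roots.prod‖) := by
    rw [h0, hlc]
    have : 0 ≤ ‖F.roots.prod‖ := norm_nonneg _
    field_simp
  have h3 := h2.trans (Complex.re_le_norm _)
  rw [norm_mul, hz, one_mul, norm_div, le_div_iff₀ (by simpa using hFz)] at h3
  rw [e]
  calc _ = _ := by ring
    _ ≤ _ := h3

lemma aux_min_s4 (P : ℂ[X]) (hP : P ≠ 0) (m : ℝ) (hm : 0 < m)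
    (hroots : ∀ w : ℂ, P.IsRoot w → ‖w‖ ≤ 1)
    (hmin : ∀ z : ℂ, ‖z‖ = 1 → m ≤ ‖P.eval z‖) :
    (∀ z : ℂ, 1 ≤ ‖z‖ → m * ‖z‖ ^ P.natDegree ≤ ‖P.eval z‖) ∧ m ≤ ‖P.leadingCoeff‖ := by
  have hR : ∀ w : ℂ, w ≠ 0 → P.reverse.eval w = P.eval w⁻¹ * w ^ P.natDegree := by
    intro w hw
    letI := invertibleOfNonzero (inv_ne_zero hw)
    have := eval₂_reverse_mul_pow (RingHom.id ℂ) w⁻¹ P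
    simp only [invOf_eq_inv, inv_inv, eval₂_id] at this
    rw [← this, mul_assoc, ← mul_pow, inv_mul_cancel₀ hw]; simp
  have hR0 : P.reverse.eval 0 = P.leadingCoeff := by
    rw [← coeff_zero_eq_eval_zero, coeff_zero_reverse]
  have hne : ∀ w : ℂ, ‖w‖ ≤ 1 → P.reverse.eval w ≠ 0 := by
    intro w hw
    by_cases h0 : w = 0
    · rw [h0, hR0]; simpa using hP
    rw [hR w h0]
    refine mul_ne_zero ?_ (pow_ne_zero _ h0)
    intro hr
    have h1 := hroots _ hr
    rw [norm_inv] at h1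
    have h2 : 0 < ‖w‖ := by simpa using h0
    have h3 : ‖w‖ = 1 := le_antisymm hw ((inv_le_one₀ h2).mp h1)
    have h4 := hmin w⁻¹ (by rw [norm_inv, h3, inv_one])
    rw [hr, norm_zero] at h4
    linarith
  have key : ∀ w : ℂ, ‖w‖ ≤ 1 → m ≤ ‖P.reverse.eval w‖ := by
    intro w hw
    have hd : DiffContOnCl ℂ (fun w => (P.reverse.eval w)⁻¹) (ball (0:ℂ) 1) := by
      apply DifferentiableOn.diffContOnCl
      rw [closure_ball _ one_ne_zero]
      intro x hx
      have := hne x (by simpa using hx)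
      exact ((P.reverse.differentiable x).inv this).differentiableWithinAt
    have := Complex.norm_le_of_forall_mem_frontier_norm_le (C := m⁻¹) isBounded_ball hd
      (fun x hx => by
        rw [frontier_ball _ one_ne_zero] at hx
        have hx1 : ‖x‖ = 1 := by simpa using hx
        have hx0 : x ≠ 0 := by rintro rfl; simp at hx1
        rw [norm_inv]
        apply inv_anti₀ hm
        rw [hR x hx0, norm_mul, norm_pow, hx1, one_pow, mul_one]
        exact hmin _ (by rw [norm_inv, hx1, inv_one]))
      (z := w) (by rw [closure_ball _ one_ne_zero]; simpa using hw)
    rw [norm_inv] at this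
    exact (inv_le_inv₀ (by simpa using hne w hw) hm).mp this
  refine ⟨fun z hz => ?_, ?_⟩
  · have hz0 : z ≠ 0 := by rintro rfl; norm_num at hz
    have := key z⁻¹ (by rw [norm_inv]; exact inv_le_one_of_one_le₀ hz)
    rw [hR _ (inv_ne_zero hz0), inv_inv, norm_mul, norm_pow, norm_inv, inv_pow,
      ← div_eq_mul_inv, le_div_iff₀ (by positivity)] at this
    exact this
  · rw [← hR0]; exact key 0 (by simp)

lemma aux_point (n : ℕ) (hn : 2 ≤ n) (P : Polynomial ℂ) (hdeg : P.natDegree = n)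
    (hroots : ∀ w : ℂ, P.IsRoot w → ‖w‖ ≤ 1)
    (m : ℝ) (hm0 : 0 ≤ m) (hmin : ∀ z : ℂ, ‖z‖ = 1 → m ≤ ‖P.eval z‖)
    (l : ℝ) (hl0 : 0 ≤ l) (hl1 : l < 1) (z : ℂ) (hz : ‖z‖ = 1) :
      ((n : ℝ) / 2) * (‖P.eval z‖ + l * m) +
        (1 / 2) *
          ((‖P.coeff n‖ - l * m - ‖P.coeff 0‖) /
              (‖P.coeff n‖ - l * m + ‖P.coeff 0‖)) *
          (‖P.eval z‖ - l * m) ≤ ‖P.derivative.eval z‖ := by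
  have hP : P ≠ 0 := by rintro rfl; simp at hdeg; omega
  have hlc : P.coeff n = P.leadingCoeff := by rw [← hdeg]; rfl
  have hlc0 : 0 < ‖P.coeff n‖ := by rw [hlc]; simpa using hP
  have hz0 : z ≠ 0 := by rintro rfl; simp at hz
  have hn0 : (0:ℝ) < n := by exact_mod_cast (by omega : 0 < n)
  have hn0' : (n:ℂ) ≠ 0 := by exact_mod_cast (by omega : n ≠ 0)
  have hn2 : (2:ℝ) ≤ n := by exact_mod_cast hn
  have hmlc : l * m < ‖P.coeff n‖ := by
    rcases hm0.eq_or_lt with h | h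
    · rw [← h, mul_zero]; exact hlc0
    · have := (aux_min_s4 P hP m h hroots hmin).2
      rw [hlc]
      nlinarith
  have hlm : 0 ≤ l * m := by positivity
  set A := (‖P.coeff n‖ - l * m - ‖P.coeff 0‖) / (‖P.coeff n‖ - l * m + ‖P.coeff 0‖) with hA
  have hden : 0 < ‖P.coeff n‖ - l * m + ‖P.coeff 0‖ := by
    have := norm_nonneg (P.coeff 0); linarith
  have hA1 : -1 ≤ A := by
    rw [hA, le_div_iff₀ hden]; linarith
  -- the perturbed polynomial
  have main : ∀ c : ℂ, ‖c‖ ≤ l * m → 1 / 2 * (n + A) * ‖P.eval z + c * z ^ n‖ ≤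
      ‖P.derivative.eval z + c * (n * z ^ (n - 1))‖ := by
    intro c hc
    set F := P + C c * X ^ n with hFdef
    have hFn : F.coeff n = P.coeff n + c := by simp [hFdef]
    have hFnn : ‖P.coeff n‖ - l * m ≤ ‖F.coeff n‖ := by
      rw [hFn]
      have := norm_sub_norm_le (P.coeff n) (-c)
      rw [norm_neg, sub_neg_eq_add] at this
      linarith
    have hF0 : F.coeff 0 = P.coeff 0 := by
      simp only [hFdef, coeff_add, coeff_C_mul, coeff_X_pow, if_neg (by omega : ¬ (0 = n)),
        mul_zero, add_zero]
    have hFn0 : F.coeff n ≠ 0 := by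
      intro h; rw [h, norm_zero] at hFnn; linarith
    have hFne : F ≠ 0 := by intro h; rw [h] at hFn0; simp at hFn0
    have hFdeg : F.natDegree = n := by
      apply le_antisymm
      · refine natDegree_add_le_of_degree_le hdeg.le (natDegree_C_mul_X_pow_le c n)
      · exact le_natDegree_of_ne_zero hFn0
    have hFroots : ∀ w : ℂ, F.IsRoot w → ‖w‖ ≤ 1 := by
      intro w hw
      rcases hm0.eq_or_lt with h | h
      · rw [← h, mul_zero] at hc
        have : c = 0 := by simpa using hc
        apply hroots
        simpa [hFdef, this] using hw
      · by_contra! hcon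
        have h1 := (aux_min_s4 P hP m h hroots hmin).1 w hcon.le
        have h2 : P.eval w = -(c * w ^ n) := by
          have : P.eval w + c * w ^ n = 0 := by simpa [hFdef, IsRoot.def] using hw
          linear_combination this
        rw [h2, norm_neg, norm_mul, norm_pow, hdeg] at h1
        have h3 : 0 < ‖w‖ ^ n := by positivity
        have := le_of_mul_le_mul_right h1 h3
        nlinarith
    have hd := aux_dub n F hFne hFdeg hFroots z hz
    have e1 : F.eval z = P.eval z + c * z ^ n := by simp [hFdef]
    have e2 : F.derivative.eval z = P.derivative.eval z + c * (n * z ^ (n - 1)) := by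
      simp [hFdef, derivative_X_pow]
    rw [e1, e2, hF0] at hd
    refine le_trans ?_ hd
    gcongr
    have h0 := norm_nonneg (P.coeff 0)
    rw [hA, div_le_div_iff₀ hden (by linarith)]
    nlinarith
  have hF : ∀ c : ℂ, ‖c‖ ≤ l * m → ‖P.eval z‖ - l * m ≤ ‖P.eval z + c * z ^ n‖ := by
    intro c hc
    have := norm_sub_norm_le (P.eval z) (-(c * z ^ n))
    rw [norm_neg, sub_neg_eq_add, norm_mul, norm_pow, hz, one_pow, mul_one] at this
    linarith
  set D := P.derivative.eval z with hD
  have hzp : z ^ (n - 1) ≠ 0 := pow_ne_zero _ hz0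
  rcases le_or_gt (n * (l * m)) ‖D‖ with h | h
  · have hc : ∃ c : ℂ, ‖c‖ ≤ l * m ∧ ‖D + c * (n * z ^ (n - 1))‖ = ‖D‖ - n * (l * m) := by
      by_cases hD0 : D = 0
      · refine ⟨0, by simpa using hlm, ?_⟩
        rw [hD0, norm_zero] at h
        have : n * (l * m) = 0 := le_antisymm h (by positivity)
        rw [this]; simp
      have hDn : 0 < ‖D‖ := by simpa using hD0
      refine ⟨-((l * m / ‖D‖ : ℝ) : ℂ) * D / z ^ (n - 1), ?_, ?_⟩
      · rw [norm_div, norm_mul, norm_neg, norm_pow, hz, one_pow, div_one, Complex.norm_real,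
          Real.norm_eq_abs, abs_of_nonneg (by positivity), div_mul_cancel₀ _ hDn.ne']
      · have : D + -((l * m / ‖D‖ : ℝ) : ℂ) * D / z ^ (n - 1) * (n * z ^ (n - 1)) =
            ((1 - n * (l * m / ‖D‖) : ℝ) : ℂ) * D := by
          push_cast
          field_simp
          ring
        rw [this, norm_mul, Complex.norm_real, Real.norm_eq_abs, abs_of_nonneg]
        · field_simp
        · rw [sub_nonneg, ← mul_div_assoc]
          exact (div_le_one hDn).mpr h
    obtain ⟨c, hc1, hc2⟩ := hc
    have h1 := main c hc1
    have h2 := hF c hc1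
    rw [hc2] at h1
    have h3 : 1 / 2 * (n + A) * (‖P.eval z‖ - l * m) ≤ 1 / 2 * (n + A) * ‖P.eval z + c * z ^ n‖ :=
      mul_le_mul_of_nonneg_left h2 (by linarith)
    linarith
  · exfalso
    have hc1 : ‖-D / (n * z ^ (n - 1))‖ ≤ l * m := by
      rw [norm_div, norm_neg, norm_mul, norm_pow, hz, one_pow, mul_one, Complex.norm_natCast,
        div_le_iff₀ hn0]
      linarith
    have h1 := main _ hc1
    have h2 := hF _ hc1
    rw [div_mul_cancel₀ _ (mul_ne_zero hn0' hzp), add_neg_cancel, norm_zero] at h1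
    have h4 : 0 < n * (l * m) := lt_of_le_of_lt (norm_nonneg _) h
    have h5 : 0 < l * m := pos_of_mul_pos_right h4 hn0.le
    have h6 : 0 < m := pos_of_mul_pos_right h5 hl0
    have h7 := hmin z hz
    have h8 : 0 < ‖P.eval z‖ - l * m := by nlinarith
    have := mul_pos (by linarith : 0 < 1 / 2 * (n + A)) (h8.trans_le h2)
    linarith

theorem stmt_4 (n : ℕ) (hn : 2 ≤ n) (P : Polynomial ℂ) (hdeg : P.natDegree = n)
    (hroots : ∀ w : ℂ, P.IsRoot w → ‖w‖ ≤ 1)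
    (m₁ : ℝ) (hm₁ : m₁ = minMod P 1) (l : ℝ) (hl0 : 0 ≤ l) (hl1 : l < 1) :
    maxMod (Polynomial.derivative P) 1 ≥
      ((n : ℝ) / 2) * (maxMod P 1 + l * m₁) +
        (1 / 2) *
          ((‖P.coeff n‖ - l * m₁ - ‖P.coeff 0‖) /
              (‖P.coeff n‖ - l * m₁ + ‖P.coeff 0‖)) *
          (maxMod P 1 - l * m₁) := by
  have hne : Nonempty (sphere (0:ℂ) 1) := ⟨⟨1, by simp⟩⟩
  have hbdd : ∀ Q : ℂ[X], BddAbove (Set.range fun z : sphere (0:ℂ) 1 => ‖Q.eval (z:ℂ)‖) := by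
    intro Q
    exact (isCompact_range (by fun_prop)).bddAbove
  have hm0 : 0 ≤ m₁ := by
    rw [hm₁]; exact Real.iInf_nonneg fun _ => norm_nonneg _
  have hmin : ∀ z : ℂ, ‖z‖ = 1 → m₁ ≤ ‖P.eval z‖ := by
    intro z hz
    rw [hm₁]
    exact ciInf_le (f := fun z : sphere (0:ℂ) 1 => ‖P.eval (z:ℂ)‖)
      ⟨0, by rintro _ ⟨x, rfl⟩; exact norm_nonneg _⟩ ⟨z, by simpa using hz⟩
  obtain ⟨z, hz⟩ : ∃ z : sphere (0:ℂ) 1, ‖P.eval (z:ℂ)‖ = maxMod P 1 :=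
    (isCompact_range (f := fun z : sphere (0:ℂ) 1 => ‖P.eval (z:ℂ)‖) (by fun_prop)).sSup_mem
      (Set.range_nonempty _)
  rw [← hz]
  have hz1 : ‖(z:ℂ)‖ = 1 := by simpa using z.2
  exact (aux_point n hn P hdeg hroots m₁ hm0 hmin l hl0 hl1 z hz1).trans
    (le_ciSup (hbdd P.derivative) z)
end

section
/- (Turán's inequality) Let P be a complex polynomial of degree n ≥ 1 all of whose zeros lie in |z| ≤ 1. Then max_{|z|=1}|P′(z)| ≥ (n/2)·max_{|z|=1}|P(z)|. -/
open Polynomial Metric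

lemma turan_re (z w : ℂ) (hz : ‖z‖ = 1) (hw : ‖w‖ ≤ 1) (hne : z ≠ w) :
    1 / 2 ≤ (z * (1 / (z - w))).re := by
  have h0 : 0 < Complex.normSq (z - w) := Complex.normSq_pos.2 (sub_ne_zero.2 hne)
  have h1 : z.re * z.re + z.im * z.im = 1 := by
    rw [← Complex.normSq_apply, Complex.normSq_eq_norm_sq, hz]; norm_num
  have h2 : w.re * w.re + w.im * w.im ≤ 1 := by
    rw [← Complex.normSq_apply, Complex.normSq_eq_norm_sq]
    nlinarith [norm_nonneg w]
  have h3 : (z * (1 / (z - w))).re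
      = (z.re * (z.re - w.re) + z.im * (z.im - w.im)) / Complex.normSq (z - w) := by
    rw [mul_one_div, Complex.div_re]
    simp only [Complex.sub_re, Complex.sub_im]
    ring
  rw [h3, le_div_iff₀ h0, Complex.normSq_apply]
  simp only [Complex.sub_re, Complex.sub_im]
  nlinarith

lemma turan_sum (z : ℂ) (s : Multiset ℂ) (hs : ∀ w ∈ s, 1 / 2 ≤ (z * (1 / (z - w))).re) :
    (Multiset.card s : ℝ) / 2 ≤ (z * (s.map fun w => 1 / (z - w)).sum).re := by
  induction s using Multiset.induction_on with
  | empty => simp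
  | cons a s ih =>
    have h1 := ih fun w hw => hs w (Multiset.mem_cons_of_mem hw)
    have h2 := hs a (Multiset.mem_cons_self a s)
    rw [Multiset.map_cons, Multiset.sum_cons, Multiset.card_cons, mul_add, Complex.add_re]
    push_cast
    linarith

lemma turan_pointwise (P : Polynomial ℂ) (hroots : ∀ w : ℂ, P.IsRoot w → ‖w‖ ≤ 1)
    (z : ℂ) (hz : ‖z‖ = 1) :
    (P.natDegree : ℝ) / 2 * ‖P.eval z‖ ≤ ‖(Polynomial.derivative P).eval z‖ := by
  by_cases h : P.eval z = 0
  · simp [h]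
  have hsp := IsAlgClosed.splits P
  have hs := turan_sum z P.roots fun w hw => by
    have hr := Polynomial.isRoot_of_mem_roots hw
    refine turan_re z w hz (hroots w hr) ?_
    rintro rfl
    exact h hr
  rw [← hsp.eval_derivative_div_eval_of_ne_zero h, ← hsp.natDegree_eq_card_roots] at hs
  have h2 := hs.trans (Complex.re_le_norm _)
  rw [norm_mul, hz, one_mul, norm_div, le_div_iff₀ (norm_pos_iff.2 h)] at h2
  exact h2

theorem stmt_9 (n : ℕ) (hn : 1 ≤ n) (P : Polynomial ℂ) (hdeg : P.natDegree = n)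
    (hroots : ∀ w : ℂ, P.IsRoot w → ‖w‖ ≤ 1) :
    maxMod (Polynomial.derivative P) 1 ≥ ((n : ℝ) / 2) * maxMod P 1 := by
  subst hdeg
  have hbdd : BddAbove (Set.range fun z : sphere (0 : ℂ) 1 =>
      ‖(Polynomial.derivative P).eval (z : ℂ)‖) := by
    refine (isCompact_range ?_).bddAbove
    exact ((Polynomial.derivative P).continuous.comp continuous_subtype_val).norm
  haveI : Nonempty (sphere (0 : ℂ) 1) := ⟨⟨1, by simp⟩⟩
  unfold maxMod
  rw [ge_iff_le, Real.mul_iSup_of_nonneg (by positivity)]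
  refine ciSup_le fun z => ?_
  refine (turan_pointwise P hroots z (by simpa using z.2)).trans ?_
  exact le_ciSup hbdd z
end

section
/- (Govil's inequality) Let P be a complex polynomial of degree n ≥ 1 all of whose zeros lie in |z| ≤ k with k ≥ 1. Then max_{|z|=1}|P′(z)| ≥ (n/(1 + k^n))·max_{|z|=1}|P(z)|. -/
open Polynomial Metric

lemma le_maxMod (P : Polynomial ℂ) (z : ℂ) (hz : ‖z‖ = 1) : ‖P.eval z‖ ≤ maxMod P 1 := by
  have hb : BddAbove (Set.range fun z : sphere (0 : ℂ) 1 => ‖P.eval (z : ℂ)‖) := by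
    have h : Continuous fun z : sphere (0 : ℂ) 1 => ‖P.eval (z : ℂ)‖ := by fun_prop
    exact (isCompact_range h).bddAbove
  exact le_ciSup hb ⟨z, by simpa using hz⟩

lemma eval_rev (p : ℂ[X]) (v : ℂ) (hv : v ≠ 0) :
    p.reverse.eval v = v ^ p.natDegree * p.eval v⁻¹ := by
  let : Invertible (v⁻¹) := invertibleOfNonzero (inv_ne_zero hv)
  have h := eval₂_reverse_mul_pow (RingHom.id ℂ) (v⁻¹) p
  rw [invOf_eq_inv, inv_inv] at h
  change p.reverse.eval v * v⁻¹ ^ p.natDegree = p.eval v⁻¹ at h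
  rw [← h, inv_pow]
  field_simp

lemma max_disc {f : ℂ → ℂ} (hf : ∀ z, ‖z‖ ≤ 1 → DifferentiableAt ℂ f z) (C : ℝ)
    (h : ∀ z, ‖z‖ = 1 → ‖f z‖ ≤ C) (z : ℂ) (hz : ‖z‖ ≤ 1) : ‖f z‖ ≤ C := by
  have hd : DiffContOnCl ℂ f (ball 0 1) := by
    apply DifferentiableOn.diffContOnCl
    intro x hx
    rw [closure_ball _ one_ne_zero] at hx
    exact (hf x (by simpa using hx)).differentiableWithinAt
  refine Complex.norm_le_of_forall_mem_frontier_norm_le isBounded_ball hd (fun x hx => ?_) ?_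
  · rw [frontier_ball _ one_ne_zero] at hx
    exact h x (by simpa using hx)
  · rw [closure_ball _ one_ne_zero]; simpa using hz

lemma growth_s10 (p : ℂ[X]) (u : ℂ) (hu : 1 ≤ ‖u‖) :
    ‖p.eval u‖ ≤ ‖u‖ ^ p.natDegree * maxMod p 1 := by
  have hu0 : u ≠ 0 := by intro h; simp [h] at hu; linarith
  have := max_disc (f := fun z => p.reverse.eval z) (fun z _ => p.reverse.differentiableAt)
    (maxMod p 1) (fun z hz => by
      have hz0 : z ≠ 0 := by intro h; simp [h] at hz
      simp only [eval_rev p z hz0, norm_mul, norm_pow, hz, one_pow, one_mul]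
      exact le_maxMod _ _ (by simp [hz])) u⁻¹ (by rw [norm_inv]; exact inv_le_one_of_one_le₀ hu)
  simp only [eval_rev p _ (inv_ne_zero hu0), inv_inv, norm_mul, norm_pow, norm_inv] at this
  have hp : 0 < ‖u‖ ^ p.natDegree := by positivity
  rw [inv_pow, inv_mul_le_iff₀ hp] at this
  exact this

lemma re_half (u w : ℂ) (h : ‖w‖ < ‖u‖) : 1 / 2 ≤ (u * (1 / (u - w))).re := by
  have hne : u - w ≠ 0 := by
    intro h'; rw [sub_eq_zero.1 h'] at h; exact lt_irrefl _ h
  have hp : 0 < Complex.normSq (u - w) := Complex.normSq_pos.2 hne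
  have h2 : Complex.normSq w ≤ Complex.normSq u := by
    rw [Complex.normSq_eq_norm_sq, Complex.normSq_eq_norm_sq]; gcongr
  rw [mul_one_div, Complex.div_re, ← add_div, le_div_iff₀ hp]
  simp only [Complex.normSq_apply, Complex.sub_re, Complex.sub_im] at *
  nlinarith

lemma sum_re (s : Multiset ℂ) (u : ℂ) (h : ∀ w ∈ s, ‖w‖ < ‖u‖) :
    (Multiset.card s : ℝ) / 2 ≤ (u * (s.map fun w => 1 / (u - w)).sum).re := by
  induction s using Multiset.induction_on with
  | empty => simp
  | cons a s ih =>
    have h1 := ih (fun w hw => h w (Multiset.mem_cons_of_mem hw))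
    have h2 := re_half u a (h a (Multiset.mem_cons_self a s))
    simp only [Multiset.map_cons, Multiset.sum_cons, Multiset.card_cons, mul_add, Complex.add_re]
    push_cast
    linarith

lemma bd (G : ℂ[X]) (hr : ∀ w, G.IsRoot w → ‖w‖ < 1) (u : ℂ) (hu : 1 ≤ ‖u‖) :
    ‖G.natDegree * G.eval u - u * G.derivative.eval u‖ ≤ ‖u * G.derivative.eval u‖ := by
  have h0 : G.eval u ≠ 0 := fun h => absurd (hr u h) (not_lt.2 hu)
  have hs := IsAlgClosed.splits G
  have e := hs.eval_derivative_div_eval_of_ne_zero h0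
  have hG : G ≠ 0 := by rintro rfl; simp at h0
  have h1 := sum_re G.roots u (fun w hw => (hr w ((mem_roots hG).1 hw)).trans_le hu)
  rw [← e, ← hs.natDegree_eq_card_roots] at h1
  set s := u * (G.derivative.eval u / G.eval u) with hsdef
  have e1 : u * G.derivative.eval u = s * G.eval u := by rw [hsdef]; field_simp
  rw [e1, ← sub_mul, norm_mul, norm_mul]
  gcongr
  rw [← sq_le_sq₀ (norm_nonneg _) (norm_nonneg _), ← Complex.normSq_eq_norm_sq,
    ← Complex.normSq_eq_norm_sq, Complex.normSq_apply, Complex.normSq_apply]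
  simp
  have : (0:ℝ) ≤ G.natDegree := by positivity
  nlinarith

lemma key (G : ℂ[X]) (hn : 1 ≤ G.natDegree) (hr : ∀ w, G.IsRoot w → ‖w‖ < 1) (u : ℂ)
    (hu : 1 ≤ ‖u‖) :
    ‖G.natDegree * G.eval (starRingEnd ℂ u)⁻¹ - (starRingEnd ℂ u)⁻¹ * G.derivative.eval (starRingEnd ℂ u)⁻¹‖ * ‖u‖ ^ (G.natDegree - 1)
      ≤ ‖G.derivative.eval u‖ := by
  set q := G.derivative.map (starRingEnd ℂ) with hq
  have hd : q.natDegree = G.natDegree - 1 := by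
    rw [hq, natDegree_map, natDegree_derivative]
  have hqe : ∀ x, q.eval (starRingEnd ℂ x) = starRingEnd ℂ (G.derivative.eval x) := by
    intro x; rw [hq, eval_map, eval₂_hom]
  have hne' : ∀ x : ℂ, 1 ≤ ‖x‖ → G.derivative.eval x ≠ 0 := by
    intro x hx h
    have := bd G hr x hx
    rw [h, mul_zero, sub_zero, norm_zero, norm_le_zero_iff, mul_eq_zero] at this
    rcases this with h | h
    · have h' : G.natDegree = 0 := by exact_mod_cast h
      omega
    · exact absurd (hr x h) (not_lt.2 hx)
  have hq0 : q ≠ 0 := by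
    intro h
    have := hqe 1
    rw [h, eval_zero] at this
    exact hne' 1 (by simp) ((map_eq_zero _).1 this.symm)
  have hqi : ∀ v : ℂ, v ≠ 0 → ‖q.reverse.eval v‖ =
      ‖v‖ ^ (G.natDegree - 1) * ‖G.derivative.eval (starRingEnd ℂ v)⁻¹‖ := by
    intro v hv
    rw [eval_rev q v hv, norm_mul, norm_pow, hd]
    have := hqe (starRingEnd ℂ v)⁻¹
    rw [map_inv₀, Complex.conj_conj] at this
    rw [this, RCLike.norm_conj]
  have hA : ∀ v : ℂ, ‖v‖ ≤ 1 → q.reverse.eval v ≠ 0 := by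
    intro v hv
    by_cases h0 : v = 0
    · rw [h0, ← coeff_zero_eq_eval_zero, coeff_zero_reverse]
      simpa using hq0
    · rw [← norm_ne_zero_iff, hqi v h0]
      have : 1 ≤ ‖(starRingEnd ℂ v)⁻¹‖ := by
        rw [norm_inv, RCLike.norm_conj]
        exact (one_le_inv₀ (norm_pos_iff.2 h0)).2 hv
      have := hne' _ this
      positivity
  have hu0 : u ≠ 0 := by intro h; simp [h] at hu; linarith
  have hc0 : starRingEnd ℂ u ≠ 0 := by simpa using hu0
  have := max_disc (f := fun v => (G.natDegree * G.eval v - v * G.derivative.eval v) / q.reverse.eval v)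
    (fun z hz => by
      refine DifferentiableAt.div ?_ q.reverse.differentiableAt (hA z hz)
      exact ((differentiableAt_const _).mul G.differentiableAt).sub
        (differentiableAt_id.mul G.derivative.differentiableAt)) 1
    (fun z hz => by
      have hz0 : z ≠ 0 := by intro h; simp [h] at hz
      have hzz : (starRingEnd ℂ z)⁻¹ = z := by
        rw [← Complex.inv_eq_conj hz, inv_inv]
      rw [norm_div, hqi z hz0, hzz]
      have := bd G hr z hz.ge
      rw [norm_mul, hz, one_mul] at this
      rw [hz, one_pow, one_mul]
      exact div_le_one_of_le₀ this (norm_nonneg _)) (starRingEnd ℂ u)⁻¹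
      (by rw [norm_inv, RCLike.norm_conj]; exact inv_le_one_of_one_le₀ hu)
  rw [norm_div, hqi _ (inv_ne_zero hc0), map_inv₀, Complex.conj_conj, inv_inv, norm_inv,
    RCLike.norm_conj, div_le_one, inv_pow, le_inv_mul_iff₀ (by positivity), mul_comm] at this
  · exact this
  · have := hne' u hu
    positivity

lemma govil_strict (P : ℂ[X]) (hn : 1 ≤ P.natDegree) (k : ℝ) (hk : 1 ≤ k)
    (hr : ∀ w, P.IsRoot w → ‖w‖ < k) (z : ℂ) (hz : ‖z‖ = 1) :
    P.natDegree * ‖P.eval z‖ ≤ (1 + k ^ P.natDegree) * maxMod P.derivative 1 := by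
  have hk0 : 0 < k := by linarith
  have hkc : (k : ℂ) ≠ 0 := by exact_mod_cast hk0.ne'
  set G := P.comp (C (k:ℂ) * X) with hG
  have hGd : G.natDegree = P.natDegree := by
    rw [hG, natDegree_comp, natDegree_C_mul_X _ hkc, mul_one]
  have hGe : ∀ x, G.eval x = P.eval (k * x) := by intro x; simp [hG]
  have hGe' : ∀ x, G.derivative.eval x = k * P.derivative.eval (k * x) := by
    intro x; simp [hG, derivative_comp]
  have h := key G (hGd ▸ hn) (fun w hw => by
    have := hr (k * w) (by rw [IsRoot, ← hGe]; exact hw)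
    rw [norm_mul, Complex.norm_real, Real.norm_of_nonneg hk0.le] at this
    nlinarith) (k * z) (by simp [hz, abs_of_pos hk0, hk])
  have hc : (starRingEnd ℂ (k * z))⁻¹ = (k : ℂ)⁻¹ * z := by
    rw [map_mul, Complex.conj_ofReal, mul_inv, ← Complex.inv_eq_conj hz, inv_inv]
  rw [hc, hGd, hGe, hGe', hGe', mul_inv_cancel_left₀ hkc, norm_mul (k:ℂ) z, hz, norm_mul (k:ℂ) (eval _ _),
    Complex.norm_real, Real.norm_of_nonneg hk0.le, mul_one] at h
  have e : (k:ℂ)⁻¹ * z * (k * P.derivative.eval z) = z * P.derivative.eval z := by field_simp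
  rw [e] at h
  have g := growth_s10 P.derivative (k * (k * z)) (by simp [hz, abs_of_pos hk0]; nlinarith)
  rw [natDegree_derivative, norm_mul, norm_mul, hz, Complex.norm_real,
    Real.norm_of_nonneg hk0.le, mul_one] at g
  have l := le_maxMod P.derivative z hz
  set M := maxMod P.derivative 1
  obtain ⟨m, hm⟩ : ∃ m, P.natDegree = m + 1 := ⟨P.natDegree - 1, by omega⟩
  have t : (P.natDegree : ℝ) * ‖P.eval z‖ ≤ ‖P.natDegree * P.eval z - z * P.derivative.eval z‖ + ‖P.derivative.eval z‖ := by
    have := norm_add_le (P.natDegree * P.eval z - z * P.derivative.eval z) (z * P.derivative.eval z)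
    rw [sub_add_cancel, norm_mul, norm_mul z, hz, one_mul, Complex.norm_natCast] at this
    exact this
  set T := ‖P.natDegree * P.eval z - z * P.derivative.eval z‖
  have q : T ≤ k ^ P.natDegree * M := by
    rw [hm, Nat.add_sub_cancel] at h g
    rw [hm]
    have hp : 0 < k ^ m := by positivity
    refine le_of_mul_le_mul_right ?_ hp
    calc T * k ^ m ≤ _ := h
      _ ≤ k * ((k * k) ^ m * M) := by gcongr
      _ = _ := by ring
  linarith

theorem stmt_10 (n : ℕ) (hn : 1 ≤ n) (P : Polynomial ℂ) (hdeg : P.natDegree = n)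
    (k : ℝ) (hk : 1 ≤ k) (hroots : ∀ w : ℂ, P.IsRoot w → ‖w‖ ≤ k) :
    maxMod (Polynomial.derivative P) 1 ≥ ((n : ℝ) / (1 + k ^ n)) * maxMod P 1 := by
  subst hdeg
  have hk0 : 0 < k := by linarith
  have hp : 0 < 1 + k ^ P.natDegree := by positivity
  have hn0 : (0:ℝ) < P.natDegree := by exact_mod_cast hn
  have h : ∀ z : ℂ, ‖z‖ = 1 →
      P.natDegree * ‖P.eval z‖ ≤ (1 + k ^ P.natDegree) * maxMod P.derivative 1 := by
    intro z hz
    have hc : Filter.Tendsto (fun t : ℝ => (1 + t ^ P.natDegree) * maxMod P.derivative 1)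
        (nhdsWithin k (Set.Ioi k)) (nhds ((1 + k ^ P.natDegree) * maxMod P.derivative 1)) :=
      (Continuous.tendsto (by fun_prop) k).mono_left nhdsWithin_le_nhds
    refine ge_of_tendsto hc ?_
    filter_upwards [self_mem_nhdsWithin] with t ht
    have ht : k < t := ht
    exact govil_strict P hn t (by linarith) (fun w hw => (hroots w hw).trans_lt ht) z hz
  rw [ge_iff_le, div_mul_eq_mul_div, div_le_iff₀ hp, mul_comm, ← le_div_iff₀ hn0]
  have : Nonempty (sphere (0:ℂ) 1) := ⟨⟨1, by simp⟩⟩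
  refine ciSup_le fun z => ?_
  rw [le_div_iff₀ hn0]
  have := h z (by simp)
  linarith
end

section
/- (Erdős–Lax inequality) Let P be a complex polynomial of degree n ≥ 1 that does not vanish in |z| < 1. Then max_{|z|=1}|P′(z)| ≤ (n/2)·max_{|z|=1}|P(z)|. -/
open Polynomial Metric

lemma re_aux (z w : ℂ) (hz : ‖z‖ = 1) (hw : 1 ≤ ‖w‖) : (z * (1 / (z - w))).re ≤ 1 / 2 := by
  by_cases h : z - w = 0
  · simp [h]
  have h1 : 0 < Complex.normSq (z - w) := Complex.normSq_pos.2 h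
  have hz2 : z.re * z.re + z.im * z.im = 1 := by
    rw [← Complex.normSq_apply, Complex.normSq_eq_norm_sq, hz]; norm_num
  have hw2 : 1 ≤ w.re * w.re + w.im * w.im := by
    rw [← Complex.normSq_apply, Complex.normSq_eq_norm_sq]; nlinarith
  have e : (z * (1 / (z - w))).re
      = (z.re * (z.re - w.re) + z.im * (z.im - w.im)) / Complex.normSq (z - w) := by
    rw [one_div, Complex.mul_re, Complex.inv_re, Complex.inv_im]
    simp only [Complex.sub_re, Complex.sub_im]
    ring
  rw [e, div_le_iff₀ h1, Complex.normSq_apply, Complex.sub_re, Complex.sub_im]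
  nlinarith

lemma multiset_re_aux (z : ℂ) (hz : ‖z‖ = 1) (s : Multiset ℂ) (hs : ∀ w ∈ s, 1 ≤ ‖w‖) :
    (z * (s.map fun w => 1 / (z - w)).sum).re ≤ (s.card : ℝ) / 2 := by
  induction s using Multiset.induction_on with
  | empty => simp
  | cons a s ih =>
    have h1 := ih (fun w hw => hs w (Multiset.mem_cons_of_mem hw))
    have h2 := re_aux z a hz (hs a (Multiset.mem_cons_self a s))
    rw [Multiset.map_cons, Multiset.sum_cons, mul_add, Complex.add_re, Multiset.card_cons]
    push_cast
    linarith

/-- Laguerre-type inequality on the unit circle. -/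
lemma laguerre_aux (Q : ℂ[X]) (hroots : ∀ w : ℂ, Q.IsRoot w → 1 ≤ ‖w‖) (z : ℂ) (hz : ‖z‖ = 1) :
    ‖(derivative Q).eval z‖ ≤ ‖(Q.natDegree : ℂ) * Q.eval z - z * (derivative Q).eval z‖ := by
  by_cases h0 : Q.eval z = 0
  · simp [h0, hz]
  have hsp := IsAlgClosed.splits Q
  have hs := hsp.eval_derivative_div_eval_of_ne_zero h0
  have hb := multiset_re_aux z hz Q.roots (fun w hw => hroots w (isRoot_of_mem_roots hw))
  rw [← hs, ← hsp.natDegree_eq_card_roots] at hb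
  set s := z * ((derivative Q).eval z / Q.eval z) with hsdef
  have e1 : z * (derivative Q).eval z = s * Q.eval z := by
    rw [hsdef]; field_simp
  have e2 : ‖(derivative Q).eval z‖ = ‖s * Q.eval z‖ := by
    rw [← e1, norm_mul, hz, one_mul]
  rw [e2, e1, ← sub_mul, norm_mul s, norm_mul (_ - s)]
  refine mul_le_mul_of_nonneg_right ?_ (norm_nonneg (Q.eval z))
  rw [← sq_le_sq₀ (norm_nonneg _) (norm_nonneg _), ← Complex.normSq_eq_norm_sq,
    ← Complex.normSq_eq_norm_sq, Complex.normSq_apply, Complex.normSq_apply]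
  simp only [Complex.sub_re, Complex.sub_im, Complex.natCast_re, Complex.natCast_im]
  have : (0 : ℝ) ≤ Q.natDegree := Nat.cast_nonneg _
  nlinarith

lemma sum_aux (P : ℂ[X]) (hn : 1 ≤ P.natDegree) (M : ℝ)
    (hM : ∀ z : ℂ, ‖z‖ = 1 → ‖P.eval z‖ ≤ M) (z : ℂ) (hz : ‖z‖ = 1) :
    ‖(derivative P).eval z‖ + ‖(P.natDegree : ℂ) * P.eval z - z * (derivative P).eval z‖
      ≤ P.natDegree * M := by
  have hn' : (0 : ℝ) < P.natDegree := by exact_mod_cast hn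
  have hnC : (P.natDegree : ℂ) ≠ 0 := by exact_mod_cast hn'.ne'
  have hM0 : 0 ≤ M := (norm_nonneg _).trans (hM z hz)
  have hball : ∀ w : ℂ, ‖w‖ < 1 → ‖P.eval w‖ ≤ M := by
    intro w hw
    refine Complex.norm_le_of_forall_mem_frontier_norm_le (U := ball (0 : ℂ) 1)
      (f := fun w => P.eval w) isBounded_ball P.differentiable.diffContOnCl ?_
      (subset_closure (by simpa using hw))
    intro v hv
    rw [frontier_ball _ one_ne_zero] at hv
    exact hM v (by simpa using hv)
  set A := (P.natDegree : ℂ) * P.eval z - z * (derivative P).eval z with hA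
  have key : ∀ l : ℂ, M < ‖l‖ → ‖(derivative P).eval z‖ ≤ ‖A - P.natDegree * l‖ := by
    intro l hl
    have := laguerre_aux (P - C l) (fun w hw => by
      by_contra! hlt
      have h1 := hball w hlt
      have h2 : P.eval w = l := by
        simpa [IsRoot, sub_eq_zero] using hw
      rw [h2] at h1
      linarith) z hz
    rw [natDegree_sub_C] at this
    simp only [derivative_sub, derivative_C, sub_zero, eval_sub, eval_C] at this
    convert this using 2
    rw [hA]; ring
  have hAle : ‖A‖ ≤ P.natDegree * M := by
    by_contra! hlt
    have h1 := key (A / P.natDegree) (by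
      rw [norm_div, Complex.norm_natCast, lt_div_iff₀ hn']; linarith)
    rw [mul_div_cancel₀ _ hnC, sub_self, norm_zero] at h1
    have h2 : (derivative P).eval z = 0 := norm_le_zero_iff.1 h1
    rw [hA, h2, mul_zero, sub_zero, norm_mul, Complex.norm_natCast] at hlt
    have := mul_le_mul_of_nonneg_left (hM z hz) hn'.le
    linarith
  obtain ⟨u, hu, hAu⟩ : ∃ u : ℂ, ‖u‖ = 1 ∧ A = ‖A‖ * u := by
    by_cases h : A = 0
    · exact ⟨1, by simp, by simp [h]⟩
    · have : (‖A‖ : ℂ) ≠ 0 := by simpa using h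
      refine ⟨A / ‖A‖, by simp [h], by field_simp⟩
  have hfin : ∀ t : ℝ, M < t → ‖(derivative P).eval z‖ + ‖A‖ ≤ P.natDegree * t := by
    intro t ht
    have h1 := key (t * u) (by
      rw [norm_mul, hu, Complex.norm_real, mul_one]; exact ht.trans_le (le_abs_self t))
    have e : A - P.natDegree * (t * u) = ((‖A‖ - P.natDegree * t : ℝ) : ℂ) * u := by
      conv_lhs => rw [hAu]
      push_cast; ring
    have h3 : (P.natDegree : ℝ) * M ≤ P.natDegree * t := by gcongr
    rw [e, norm_mul, hu, mul_one, Complex.norm_real, Real.norm_eq_abs,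
      abs_of_nonpos (by linarith)] at h1
    linarith
  refine le_of_forall_pos_le_add fun ε hε => ?_
  have := hfin (M + ε / P.natDegree) (by have := div_pos hε hn'; linarith)
  rwa [mul_add, mul_div_cancel₀ _ hn'.ne'] at this

theorem stmt_13 (n : ℕ) (hn : 1 ≤ n) (P : Polynomial ℂ) (hdeg : P.natDegree = n)
    (hroots : ∀ w : ℂ, P.IsRoot w → 1 ≤ ‖w‖) :
    maxMod (Polynomial.derivative P) 1 ≤ ((n : ℝ) / 2) * maxMod P 1 := by
  subst hdeg
  have hM : ∀ z : ℂ, ‖z‖ = 1 → ‖P.eval z‖ ≤ maxMod P 1 := by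
    intro z hz
    have hb : BddAbove (Set.range fun z : sphere (0 : ℂ) 1 => ‖P.eval (z : ℂ)‖) :=
      (isCompact_range (by fun_prop)).bddAbove
    exact le_ciSup hb ⟨z, by simpa using hz⟩
  have : Nonempty (sphere (0 : ℂ) 1) := ⟨⟨1, by simp⟩⟩
  refine ciSup_le fun z => ?_
  have hz : ‖(z : ℂ)‖ = 1 := by simpa using z.2
  have h1 := laguerre_aux P hroots z hz
  have h2 := sum_aux P hn _ hM z hz
  linarith
end
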